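/- arXiv:math/0105118 — 13 statements merged into one kernel-verified Lean document; each statement's English description precedes it below -/
import Mathlib

section
/- Let T>0, let ρ₀,u₀,v₀:ℝ²→ℝ be continuous, and for j∈{+,−} let a_j,b_j:[0,T]×ℝ→ℝ be C¹. Write ρ₀^j(τ,l):=ρ₀(a_j(τ,l),b_j(τ,l)), u₀^j(τ,l):=u₀(a_j(τ,l),b_j(τ,l)), v₀^j(τ,l):=v₀(a_j(τ,l),b_j(τ,l)), and ω_j(τ,l):=∂_τa_j(τ,l)·∂_lb_j(τ,l) − ∂_τb_j(τ,l)·∂_la_j(τ,l). Define P̃(t,l)=∫₀ᵗ(ρ₀⁺ω₊ − ρ₀⁻ω₋)dτ, Ĩ(t,l)=∫₀ᵗ(ρ₀⁺u₀⁺ω₊ − ρ₀⁻u₀⁻ω₋)dτ, J̃(t,l)=∫₀ᵗ(ρ₀⁺v₀⁺ω₊ − ρ₀⁻v₀⁻ω₋)dτ. Let x^s,y^s:[0,T]×ℝ→ℝ be continuous, differentiable in t for t∈(0,T], such that P̃(t,l)>0, ∂_t x^s(t,l)=Ĩ(t,l)/P̃(t,l) and ∂_t y^s(t,l)=J̃(t,l)/P̃(t,l)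 for all t∈(0,T], and suppose that for j∈{+,−} and all τ∈[0,T], l∈ℝ: x^s(τ,l)=a_j(τ,l)+τ·u₀^j(τ,l) and y^s(τ,l)=b_j(τ,l)+τ·v₀^j(τ,l). Then for every t∈(0,T] and l∈ℝ: ∫₀ᵗ[x^s(t,l) − a₊(τ,l) − t·u₀⁺(τ,l)]·ρ₀⁺(τ,l)·ω₊(τ,l)dτ = ∫₀ᵗ[x^s(t,l) − a₋(τ,l) − t·u₀⁻(τ,l)]·ρ₀⁻(τ,l)·ω₋(τ,l)dτ, and likewise ∫₀ᵗ[y^s(t,l) − b₊(τ,l) − t·v₀⁺(τ,l)]·ρ₀⁺·ω₊ dτ = ∫₀ᵗ[y^s(t,l) − b₋(τ,l) − t·v₀⁻(τ,l)]·ρ₀⁻·ω₋ dτ. -/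
lemma aux_d1 (a : ℝ → ℝ → ℝ) (ha : ContDiff ℝ 1 fun p : ℝ × ℝ => a p.1 p.2) (l : ℝ) :
    Continuous (fun τ => deriv (fun s => a s l) τ) := by
  have h : ContDiff ℝ 1 (fun s => a s l) :=
    ha.comp (f := fun s : ℝ => (s, l)) (contDiff_id.prodMk contDiff_const)
  exact h.continuous_deriv le_rfl

lemma aux_d2 (a : ℝ → ℝ → ℝ) (ha : ContDiff ℝ 1 fun p : ℝ × ℝ => a p.1 p.2) (l : ℝ) :
    Continuous (fun τ => deriv (fun m => a τ m) l) := by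
  have h : ∀ τ, deriv (fun m => a τ m) l
      = fderiv ℝ (fun p : ℝ × ℝ => a p.1 p.2) (τ, l) (0, 1) := by
    intro τ
    have h1 := (ha.differentiable one_ne_zero (τ, l)).hasFDerivAt
    have h2 : HasDerivAt (fun m : ℝ => (τ, m)) ((0 : ℝ), (1 : ℝ)) l :=
      (hasDerivAt_const l τ).prodMk (hasDerivAt_id l)
    exact (h1.comp_hasDerivAt l h2).deriv
  simp_rw [h]
  have h3 := ha.continuous_fderiv one_ne_zero
  have h4 : Continuous (fun τ : ℝ => fderiv ℝ (fun p : ℝ × ℝ => a p.1 p.2) (τ, l)) :=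
    h3.comp (by fun_prop : Continuous fun τ : ℝ => (τ, l))
  exact h4.clm_apply continuous_const

lemma aux_slice (a : ℝ → ℝ → ℝ) (ha : Continuous fun p : ℝ × ℝ => a p.1 p.2) (f g : ℝ → ℝ)
    (hf : Continuous f) (hg : Continuous g) : Continuous (fun τ => a (f τ) (g τ)) :=
  ha.comp (hf.prodMk hg)

lemma aux_main (T : ℝ) (x a u r w a' u' r' w' P I : ℝ → ℝ)
    (hx : Continuous x) (ha : Continuous a) (hu : Continuous u) (hr : Continuous r)
    (hw : Continuous w) (ha' : Continuous a') (hu' : Continuous u') (hr' : Continuous r')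
    (hw' : Continuous w')
    (hP : ∀ t, P t = ∫ τ in (0:ℝ)..t, (r τ * w τ - r' τ * w' τ))
    (hI : ∀ t, I t = ∫ τ in (0:ℝ)..t, (r τ * u τ * w τ - r' τ * u' τ * w' τ))
    (hpos : ∀ t ∈ Set.Ioc (0:ℝ) T, 0 < P t)
    (hd : ∀ t ∈ Set.Ioc (0:ℝ) T, HasDerivAt x (I t / P t) t)
    (hc : ∀ τ ∈ Set.Icc (0:ℝ) T, x τ = a τ + τ * u τ ∧ x τ = a' τ + τ * u' τ)
    (t : ℝ) (ht : t ∈ Set.Ioc (0:ℝ) T) :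
    (∫ τ in (0:ℝ)..t, (x t - a τ - t * u τ) * r τ * w τ) =
    (∫ τ in (0:ℝ)..t, (x t - a' τ - t * u' τ) * r' τ * w' τ) := by
  have cp : Continuous (fun τ => r τ * w τ - r' τ * w' τ) := by fun_prop
  have ci : Continuous (fun τ => r τ * u τ * w τ - r' τ * u' τ * w' τ) := by fun_prop
  have cA : Continuous (fun τ => a τ * r τ * w τ - a' τ * r' τ * w' τ) := by fun_prop
  set A : ℝ → ℝ := fun t => ∫ τ in (0:ℝ)..t, (a τ * r τ * w τ - a' τ * r' τ * w' τ) with hA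
  have dP : ∀ s, HasDerivAt P (r s * w s - r' s * w' s) s := by
    intro s
    rw [funext hP]
    exact cp.integral_hasStrictDerivAt 0 s |>.hasDerivAt
  have dI : ∀ s, HasDerivAt I (r s * u s * w s - r' s * u' s * w' s) s := by
    intro s
    rw [funext hI]
    exact ci.integral_hasStrictDerivAt 0 s |>.hasDerivAt
  have dA : ∀ s, HasDerivAt A (a s * r s * w s - a' s * r' s * w' s) s := by
    intro s
    exact cA.integral_hasStrictDerivAt 0 s |>.hasDerivAt
  have cP : Continuous P := continuous_iff_continuousAt.2 fun s => (dP s).continuousAt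
  have cI : Continuous I := continuous_iff_continuousAt.2 fun s => (dI s).continuousAt
  have cA' : Continuous A := continuous_iff_continuousAt.2 fun s => (dA s).continuousAt
  have key : x t * P t - A t - t * I t = 0 := by
    obtain ⟨c, hc1, hc2⟩ := exists_hasDerivAt_eq_slope
      (fun s => x s * P s - A s - s * I s) (fun _ => 0) ht.1
      (by fun_prop) (by
        intro s hs
        have hs' : s ∈ Set.Ioc (0:ℝ) T := ⟨hs.1, hs.2.le.trans ht.2⟩
        have h := (((hd s hs').mul (dP s)).sub (dA s)).sub ((hasDerivAt_id s).mul (dI s))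
        refine h.congr_deriv ?_
        obtain ⟨e1, e2⟩ := hc s ⟨hs'.1.le, hs'.2⟩
        rw [div_mul_cancel₀ _ (hpos s hs').ne']
        simp only [id]
        linear_combination (r s * w s) * e1 - (r' s * w' s) * e2)
    have h0 : P 0 = 0 := by simp [hP]
    have h1 : A 0 = 0 := by simp [hA]
    simp only [h0, h1] at hc2
    have : t - 0 ≠ 0 := by simpa using ht.1.ne'
    rw [eq_div_iff this] at hc2
    linarith
  rw [← sub_eq_zero, ← intervalIntegral.integral_sub
    (Continuous.intervalIntegrable (by fun_prop) _ _)
    (Continuous.intervalIntegrable (by fun_prop) _ _)]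
  refine Eq.trans ?_ key
  rw [hP, hI, hA]
  simp only
  rw [← intervalIntegral.integral_const_mul, ← intervalIntegral.integral_const_mul,
    ← intervalIntegral.integral_sub
    (Continuous.intervalIntegrable (by fun_prop) _ _)
    (Continuous.intervalIntegrable (by fun_prop) _ _),
    ← intervalIntegral.integral_sub
    (Continuous.intervalIntegrable (by fun_prop) _ _)
    (Continuous.intervalIntegrable (by fun_prop) _ _)]
  congr 1
  ext τ
  ring


/-- Generalized Rankine–Hugoniot / adhesion identities (Theorem 2.2 of the paper). -/
theorem stmt_0
    (T : ℝ) (hT : 0 < T)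
    (ρ₀ u₀ v₀ : ℝ → ℝ → ℝ)
    (hρ₀ : Continuous fun p : ℝ × ℝ => ρ₀ p.1 p.2)
    (hu₀ : Continuous fun p : ℝ × ℝ => u₀ p.1 p.2)
    (hv₀ : Continuous fun p : ℝ × ℝ => v₀ p.1 p.2)
    (aP bP aM bM : ℝ → ℝ → ℝ)
    (haP : ContDiff ℝ 1 fun p : ℝ × ℝ => aP p.1 p.2)
    (hbP : ContDiff ℝ 1 fun p : ℝ × ℝ => bP p.1 p.2)
    (haM : ContDiff ℝ 1 fun p : ℝ × ℝ => aM p.1 p.2)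
    (hbM : ContDiff ℝ 1 fun p : ℝ × ℝ => bM p.1 p.2)
    (ωP ωM : ℝ → ℝ → ℝ)
    (hωP : ∀ τ l, ωP τ l =
      deriv (fun s => aP s l) τ * deriv (fun m => bP τ m) l -
      deriv (fun s => bP s l) τ * deriv (fun m => aP τ m) l)
    (hωM : ∀ τ l, ωM τ l =
      deriv (fun s => aM s l) τ * deriv (fun m => bM τ m) l -
      deriv (fun s => bM s l) τ * deriv (fun m => aM τ m) l)
    (Pt It Jt : ℝ → ℝ → ℝ)
    (hPt : ∀ t l, Pt t l = ∫ τ in (0:ℝ)..t,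
      (ρ₀ (aP τ l) (bP τ l) * ωP τ l - ρ₀ (aM τ l) (bM τ l) * ωM τ l))
    (hIt : ∀ t l, It t l = ∫ τ in (0:ℝ)..t,
      (ρ₀ (aP τ l) (bP τ l) * u₀ (aP τ l) (bP τ l) * ωP τ l -
       ρ₀ (aM τ l) (bM τ l) * u₀ (aM τ l) (bM τ l) * ωM τ l))
    (hJt : ∀ t l, Jt t l = ∫ τ in (0:ℝ)..t,
      (ρ₀ (aP τ l) (bP τ l) * v₀ (aP τ l) (bP τ l) * ωP τ l -
       ρ₀ (aM τ l) (bM τ l) * v₀ (aM τ l) (bM τ l) * ωM τ l))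
    (xs ys : ℝ → ℝ → ℝ)
    (hxsc : Continuous fun p : ℝ × ℝ => xs p.1 p.2)
    (hysc : Continuous fun p : ℝ × ℝ => ys p.1 p.2)
    (hPpos : ∀ t ∈ Set.Ioc (0:ℝ) T, ∀ l : ℝ, 0 < Pt t l)
    (hxt : ∀ t ∈ Set.Ioc (0:ℝ) T, ∀ l : ℝ,
      HasDerivAt (fun s => xs s l) (It t l / Pt t l) t)
    (hyt : ∀ t ∈ Set.Ioc (0:ℝ) T, ∀ l : ℝ,
      HasDerivAt (fun s => ys s l) (Jt t l / Pt t l) t)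
    (hxchar : ∀ τ ∈ Set.Icc (0:ℝ) T, ∀ l : ℝ,
      xs τ l = aP τ l + τ * u₀ (aP τ l) (bP τ l) ∧
      xs τ l = aM τ l + τ * u₀ (aM τ l) (bM τ l))
    (hychar : ∀ τ ∈ Set.Icc (0:ℝ) T, ∀ l : ℝ,
      ys τ l = bP τ l + τ * v₀ (aP τ l) (bP τ l) ∧
      ys τ l = bM τ l + τ * v₀ (aM τ l) (bM τ l)) :
    ∀ t ∈ Set.Ioc (0:ℝ) T, ∀ l : ℝ,
      (∫ τ in (0:ℝ)..t, (xs t l - aP τ l - t * u₀ (aP τ l) (bP τ l)) *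
          ρ₀ (aP τ l) (bP τ l) * ωP τ l) =
      (∫ τ in (0:ℝ)..t, (xs t l - aM τ l - t * u₀ (aM τ l) (bM τ l)) *
          ρ₀ (aM τ l) (bM τ l) * ωM τ l) ∧
      (∫ τ in (0:ℝ)..t, (ys t l - bP τ l - t * v₀ (aP τ l) (bP τ l)) *
          ρ₀ (aP τ l) (bP τ l) * ωP τ l) =
      (∫ τ in (0:ℝ)..t, (ys t l - bM τ l - t * v₀ (aM τ l) (bM τ l)) *
          ρ₀ (aM τ l) (bM τ l) * ωM τ l) := by

  intro t ht l
  have s1 : ∀ a : ℝ → ℝ → ℝ, (Continuous fun p : ℝ × ℝ => a p.1 p.2) →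
      Continuous (fun τ => a τ l) := fun a h =>
    aux_slice a h (fun τ => τ) (fun _ => l) continuous_id continuous_const
  have c1 := s1 _ haP.continuous
  have c2 := s1 _ hbP.continuous
  have c3 := s1 _ haM.continuous
  have c4 := s1 _ hbM.continuous
  have w1 : Continuous (fun τ => ωP τ l) := by
    simp_rw [hωP]
    exact ((aux_d1 _ haP l).mul (aux_d2 _ hbP l)).sub ((aux_d1 _ hbP l).mul (aux_d2 _ haP l))
  have w2 : Continuous (fun τ => ωM τ l) := by
    simp_rw [hωM]
    exact ((aux_d1 _ haM l).mul (aux_d2 _ hbM l)).sub ((aux_d1 _ hbM l).mul (aux_d2 _ haM l))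
  have r1 := aux_slice _ hρ₀ _ _ c1 c2
  have r2 := aux_slice _ hρ₀ _ _ c3 c4
  constructor
  · exact aux_main T (fun s => xs s l) _ _ _ _ _ _ _ _ (fun s => Pt s l) (fun s => It s l)
      (s1 _ hxsc) c1 (aux_slice _ hu₀ _ _ c1 c2) r1 w1 c3 (aux_slice _ hu₀ _ _ c3 c4) r2 w2
      (fun s => hPt s l) (fun s => hIt s l) (fun s hs => hPpos s hs l) (fun s hs => hxt s hs l)
      (fun s hs => hxchar s hs l) t ht
  · exact aux_main T (fun s => ys s l) _ _ _ _ _ _ _ _ (fun s => Pt s l) (fun s => Jt s l)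
      (s1 _ hysc) c2 (aux_slice _ hv₀ _ _ c1 c2) r1 w1 c4 (aux_slice _ hv₀ _ _ c3 c4) r2 w2
      (fun s => hPt s l) (fun s => hJt s l) (fun s hs => hPpos s hs l) (fun s hs => hyt s hs l)
      (fun s hs => hychar s hs l) t ht
end

section
/- Let f:ℝ²→ℝ be of class C³, let l₀∈ℝ and ε>0. Suppose that for every t∈(0,ε): f(l₀,−t/2) − f(l₀,0) − (1/4)∫₀ᵗ(τ − τ²/t)·∂₁²f(l₀,−τ/2)dτ + (1/2)∫₀ᵗ∂₂f(l₀,−τ/2)dτ = 0, where ∂₁ denotes the partial derivative in the first variable and ∂₂ the partial derivative in the second variable. Then ∂₁²f(l₀,0) = 0. -/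
theorem aux_pos (g : ℝ → ℝ) (hg : Continuous g) (ε : ℝ) (hε : 0 < ε)
    (h : ∀ t ∈ Set.Ioo (0:ℝ) ε, (∫ τ in (0:ℝ)..t, (τ - τ ^ 2 / t) * g τ) = 0) :
    g 0 ≤ 0 := by
  by_contra! h0
  have hev : ∀ᶠ x in nhds (0:ℝ), 0 < g x := hg.continuousAt.eventually (lt_mem_nhds h0)
  obtain ⟨δ, hδ, hb⟩ := Metric.eventually_nhds_iff.1 hev
  have hm : 0 < min δ ε := lt_min hδ hε
  have h1 := min_le_left δ ε
  have h2 := min_le_right δ ε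
  obtain ⟨t, ht⟩ : ∃ t, t = min δ ε / 2 := ⟨_, rfl⟩
  have ht0 : 0 < t := by linarith
  have hlt : 0 < ∫ τ in (0:ℝ)..t, (τ - τ ^ 2 / t) * g τ := by
    apply intervalIntegral.intervalIntegral_pos_of_pos_on _ _ ht0
    · apply Continuous.intervalIntegrable
      fun_prop
    · intro x hx
      apply mul_pos
      · have : x - x ^ 2 / t = x * (t - x) / t := by field_simp
        rw [this]
        exact div_pos (mul_pos hx.1 (sub_pos.2 hx.2)) ht0
      · apply hb
        rw [Real.dist_eq, sub_zero, abs_of_pos hx.1]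
        linarith [hx.2]
  rw [h t ⟨ht0, by linarith⟩] at hlt
  exact lt_irrefl _ hlt

theorem aux_d1_s1 (F : ℝ × ℝ → ℝ) (hF : Differentiable ℝ F) (y : ℝ) :
    (deriv fun s => F (s, y)) = fun s => fderiv ℝ F (s, y) (1, 0) := by
  funext s
  have h1 : HasDerivAt (fun s : ℝ => (s, y)) ((1:ℝ), (0:ℝ)) s :=
    (hasDerivAt_id s).prodMk (hasDerivAt_const s y)
  exact ((hF (s, y)).hasFDerivAt.comp_hasDerivAt s h1).deriv

/-- Key computational lemma in the proof of Theorem 3.1: the matching identity between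
the Rankine–Hugoniot shock surface and the variational singularity surface forces
`∂₁²f(l₀,0) = 0`. -/
theorem stmt_1 (f : ℝ → ℝ → ℝ)
    (hf : ContDiff ℝ 3 fun p : ℝ × ℝ => f p.1 p.2)
    (l₀ ε : ℝ) (hε : 0 < ε)
    (h : ∀ t ∈ Set.Ioo (0:ℝ) ε,
      f l₀ (-t / 2) - f l₀ 0
        - (1 / 4) * (∫ τ in (0:ℝ)..t,
            (τ - τ ^ 2 / t) * deriv (deriv fun s => f s (-τ / 2)) l₀)
        + (1 / 2) * (∫ τ in (0:ℝ)..t, deriv (fun m => f l₀ m) (-τ / 2)) = 0) :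
    deriv (deriv fun s => f s 0) l₀ = 0 := by
  have hFd : Differentiable ℝ (fun p : ℝ × ℝ => f p.1 p.2) := hf.differentiable (by norm_num)
  have hF1 : ContDiff ℝ 2 (fun p => fderiv ℝ (fun p : ℝ × ℝ => f p.1 p.2) p (1, 0)) :=
    (hf.fderiv_right (by norm_num)).clm_apply contDiff_const
  have hg : Continuous fun τ : ℝ => deriv (deriv fun s => f s (-τ / 2)) l₀ := by
    have e : (fun τ : ℝ => deriv (deriv fun s => f s (-τ / 2)) l₀) = fun τ =>
        fderiv ℝ (fun p => fderiv ℝ (fun p : ℝ × ℝ => f p.1 p.2) p (1, 0)) (l₀, -τ / 2) (1, 0) := by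
      funext τ
      have a := aux_d1_s1 _ hFd (-τ / 2)
      have b := aux_d1_s1 _ (hF1.differentiable (by norm_num)) (-τ / 2)
      simp only at a
      rw [a]
      exact congrFun b l₀
    rw [e]
    have c := hF1.continuous_fderiv (by norm_num)
    exact (c.comp (by fun_prop : Continuous fun τ : ℝ => (l₀, -τ / 2))).clm_apply continuous_const
  have hl : ContDiff ℝ 3 (fun m => f l₀ m) :=
    hf.comp (contDiff_const.prodMk contDiff_id : ContDiff ℝ 3 fun m : ℝ => (l₀, m))
  have hk : ∀ t ∈ Set.Ioo (0:ℝ) ε, (∫ τ in (0:ℝ)..t,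
      (τ - τ ^ 2 / t) * deriv (deriv fun s => f s (-τ / 2)) l₀) = 0 := by
    intro t ht
    have hd : ∀ x ∈ Set.uIcc 0 t, HasDerivAt (fun τ : ℝ => -2 * f l₀ (-τ / 2))
        (deriv (fun m => f l₀ m) (-x / 2)) x := by
      intro x _
      have h1 : HasDerivAt (fun τ : ℝ => -τ / 2) (-1 / 2) x := (hasDerivAt_id x).neg.div_const 2
      have h2 := ((hl.differentiable (by norm_num)) (-x / 2)).hasDerivAt
      have h3 := (HasDerivAt.comp x h2 h1).const_mul (-2)
      have e : -2 * (deriv (fun m => f l₀ m) (-x / 2) * (-1 / 2))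
          = deriv (fun m => f l₀ m) (-x / 2) := by ring
      rw [e] at h3
      exact h3
    have hi := intervalIntegral.integral_eq_sub_of_hasDerivAt hd
      (((hl.continuous_deriv (by norm_num)).comp
        (by fun_prop : Continuous fun τ : ℝ => -τ / 2)).intervalIntegrable _ _)
    have hh := h t ht
    rw [hi] at hh
    simp only [neg_zero, zero_div] at hh
    linarith
  have p1 := aux_pos _ hg ε hε hk
  have p2 := aux_pos _ hg.neg ε hε (fun t ht => by
    simp only [Pi.neg_apply, mul_neg, intervalIntegral.integral_neg, hk t ht, neg_zero])
  simp only [Pi.neg_apply, neg_zero, zero_div] at p1 p2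
  linarith
end

section
/- Let S₀:ℝ²→ℝ be C² and for j∈{+,−} let a_j,b_j:ℝ²→ℝ be C² functions of (τ,l). Define S_j(τ,l):=S₀(a_j,b_j), u_j:=∂₁S₀(a_j,b_j), v_j:=∂₂S₀(a_j,b_j), and ω_j(τ,l):=∂_τa_j(τ,l)·∂_lb_j(τ,l) − ∂_τb_j(τ,l)·∂_la_j(τ,l). Define p* := (b₊−b₋)(∂_τa₊+∂_τa₋)/2 − (a₊−a₋)(∂_τb₊+∂_τb₋)/2, p := (b₊−b₋)(∂_la₊+∂_la₋)/2 − (a₊−a₋)(∂_lb₊+∂_lb₋)/2, i* := (b₊−b₋)(∂_τS₊+∂_τS₋)/2 − (S₊−S₋)(∂_τb₊+∂_τb₋)/2, i := (b₊−b₋)(∂_lS₊+∂_lS₋)/2 − (S₊−S₋)(∂_lb₊+∂_lb₋)/2, j* := (a₊−a₋)(∂_τS₊+∂_τS₋)/2 − (S₊−S₋)(∂_τa₊+∂_τa₋)/2, j := (a₊−a₋)(∂_lS₊+∂_lS₋)/2 − (S₊−S₋)(∂_la₊+∂_la₋)/2. Then at every point: (1) ω₊ − ω₋ = ∂_l p*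 − ∂_τ p; (2) u₊ω₊ − u₋ω₋ = ∂_l i* − ∂_τ i; (3) −(v₊ω₊ − v₋ω₋) = ∂_l j* − ∂_τ j. -/
theorem sl_data (f : ℝ → ℝ → ℝ) (hf : ContDiff ℝ 2 fun p : ℝ × ℝ => f p.1 p.2) (τ l : ℝ) :
    HasDerivAt (fun s => f s l) (deriv (fun s => f s l) τ) τ ∧
    HasDerivAt (fun m => f τ m) (deriv (fun m => f τ m) l) l ∧
    ∃ c, HasDerivAt (fun m => deriv (fun s => f s m) τ) c l ∧
      HasDerivAt (fun s => deriv (fun m => f s m) l) c τ := by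
  set F : ℝ × ℝ → ℝ := fun p => f p.1 p.2 with hF
  have hd : Differentiable ℝ F := hf.differentiable (by norm_num)
  have e1 : ∀ s m : ℝ, HasDerivAt (fun s : ℝ => (s, m)) ((1, 0) : ℝ × ℝ) s :=
    fun s m => (hasDerivAt_id s).prodMk (hasDerivAt_const s m)
  have e2 : ∀ s m : ℝ, HasDerivAt (fun m : ℝ => (s, m)) ((0, 1) : ℝ × ℝ) m :=
    fun s m => (hasDerivAt_const m s).prodMk (hasDerivAt_id m)
  have d1 : ∀ s m, HasDerivAt (fun s => f s m) (fderiv ℝ F (s, m) (1, 0)) s := fun s m =>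
    ((hd (s, m)).hasFDerivAt.comp_hasDerivAt s (e1 s m) :)
  have d2 : ∀ s m, HasDerivAt (fun m => f s m) (fderiv ℝ F (s, m) (0, 1)) m := fun s m =>
    ((hd (s, m)).hasFDerivAt.comp_hasDerivAt m (e2 s m) :)
  have hdd : Differentiable ℝ (fderiv ℝ F) :=
    (hf.fderiv_right (m := 1) (by norm_num)).differentiable (by norm_num)
  refine ⟨(d1 τ l).differentiableAt.hasDerivAt, (d2 τ l).differentiableAt.hasDerivAt,
    fderiv ℝ (fderiv ℝ F) (τ, l) (0, 1) (1, 0), ?_, ?_⟩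
  · simp only [fun s m => (d1 s m).deriv]
    have := (hdd (τ, l)).hasFDerivAt.comp_hasDerivAt l (e2 τ l)
    simpa using this.clm_apply (hasDerivAt_const l ((1, 0) : ℝ × ℝ))
  · simp only [fun s m => (d2 s m).deriv]
    have hs : IsSymmSndFDerivAt ℝ F (τ, l) :=
      hf.contDiffAt.isSymmSndFDerivAt (by simp)
    rw [hs.eq]
    have := (hdd (τ, l)).hasFDerivAt.comp_hasDerivAt τ (e1 τ l)
    simpa using this.clm_apply (hasDerivAt_const τ ((0, 1) : ℝ × ℝ))

theorem core_id (f g f' g' P Q : ℝ → ℝ → ℝ)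
    (hf : ContDiff ℝ 2 fun p : ℝ × ℝ => f p.1 p.2)
    (hg : ContDiff ℝ 2 fun p : ℝ × ℝ => g p.1 p.2)
    (hf' : ContDiff ℝ 2 fun p : ℝ × ℝ => f' p.1 p.2)
    (hg' : ContDiff ℝ 2 fun p : ℝ × ℝ => g' p.1 p.2)
    (hP : ∀ τ l, P τ l =
      (f τ l - f' τ l) * (deriv (fun s => g s l) τ + deriv (fun s => g' s l) τ) / 2 -
      (g τ l - g' τ l) * (deriv (fun s => f s l) τ + deriv (fun s => f' s l) τ) / 2)
    (hQ : ∀ τ l, Q τ l =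
      (f τ l - f' τ l) * (deriv (fun m => g τ m) l + deriv (fun m => g' τ m) l) / 2 -
      (g τ l - g' τ l) * (deriv (fun m => f τ m) l + deriv (fun m => f' τ m) l) / 2)
    (τ l : ℝ) :
    deriv (fun m => P τ m) l - deriv (fun s => Q s l) τ =
      (deriv (fun s => g s l) τ * deriv (fun m => f τ m) l -
        deriv (fun s => f s l) τ * deriv (fun m => g τ m) l) -
      (deriv (fun s => g' s l) τ * deriv (fun m => f' τ m) l -
        deriv (fun s => f' s l) τ * deriv (fun m => g' τ m) l) := by
  obtain ⟨f1, f2, c, f3, f4⟩ := sl_data f hf τ l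
  obtain ⟨g1, g2, d, g3, g4⟩ := sl_data g hg τ l
  obtain ⟨f1', f2', c', f3', f4'⟩ := sl_data f' hf' τ l
  obtain ⟨g1', g2', d', g3', g4'⟩ := sl_data g' hg' τ l
  have A := (((f2.sub f2').mul (g3.add g3')).div_const 2).sub
    (((g2.sub g2').mul (f3.add f3')).div_const 2)
  have B := (((f1.sub f1').mul (g4.add g4')).div_const 2).sub
    (((g1.sub g1').mul (f4.add f4')).div_const 2)
  have hA : (fun m => P τ m) = _ := funext fun m => hP τ m
  have hB : (fun s => Q s l) = _ := funext fun s => hQ s l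
  rw [hA, hB]
  refine (congrArg₂ (· - ·) A.deriv B.deriv).trans ?_
  simp only [Pi.add_apply, Pi.sub_apply]
  ring

theorem comp_data (S₀ a b S : ℝ → ℝ → ℝ)
    (hS₀ : ContDiff ℝ 2 fun p : ℝ × ℝ => S₀ p.1 p.2)
    (ha : ContDiff ℝ 2 fun p : ℝ × ℝ => a p.1 p.2)
    (hb : ContDiff ℝ 2 fun p : ℝ × ℝ => b p.1 p.2)
    (hS : ∀ τ l, S τ l = S₀ (a τ l) (b τ l)) :
    (ContDiff ℝ 2 fun p : ℝ × ℝ => S p.1 p.2) ∧ ∀ τ l,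
      deriv (fun s => S s l) τ =
        deriv (fun s => S₀ s (b τ l)) (a τ l) * deriv (fun s => a s l) τ +
        deriv (fun m => S₀ (a τ l) m) (b τ l) * deriv (fun s => b s l) τ ∧
      deriv (fun m => S τ m) l =
        deriv (fun s => S₀ s (b τ l)) (a τ l) * deriv (fun m => a τ m) l +
        deriv (fun m => S₀ (a τ l) m) (b τ l) * deriv (fun m => b τ m) l := by
  simp only [hS]
  refine ⟨hS₀.comp (ha.prodMk hb), fun τ l => ?_⟩
  obtain ⟨a1, a2, -⟩ := sl_data a ha τ l
  obtain ⟨b1, b2, -⟩ := sl_data b hb τ l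
  set F : ℝ × ℝ → ℝ := fun p => S₀ p.1 p.2 with hF
  have hd : Differentiable ℝ F := hS₀.differentiable (by norm_num)
  have H := (hd (a τ l, b τ l)).hasFDerivAt
  have u : HasDerivAt (fun s => S₀ s (b τ l)) (fderiv ℝ F (a τ l, b τ l) (1, 0)) (a τ l) :=
    (HasFDerivAt.comp_hasDerivAt (f := fun s : ℝ => (s, b τ l)) (a τ l) H ((hasDerivAt_id (a τ l)).prodMk (hasDerivAt_const (a τ l) (b τ l))) :)
  have v : HasDerivAt (fun m => S₀ (a τ l) m) (fderiv ℝ F (a τ l, b τ l) (0, 1)) (b τ l) :=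
    (HasFDerivAt.comp_hasDerivAt (f := fun m : ℝ => (a τ l, m)) (b τ l) H ((hasDerivAt_const (b τ l) (a τ l)).prodMk (hasDerivAt_id (b τ l))) :)
  have key : ∀ x y : ℝ, fderiv ℝ F (a τ l, b τ l) (x, y) =
      fderiv ℝ F (a τ l, b τ l) (1, 0) * x + fderiv ℝ F (a τ l, b τ l) (0, 1) * y := by
    intro x y
    have : ((x, y) : ℝ × ℝ) = x • ((1, 0) : ℝ × ℝ) + y • ((0, 1) : ℝ × ℝ) := by simp
    rw [this, map_add, map_smul, map_smul]
    simp only [smul_eq_mul]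
    ring
  rw [u.deriv, v.deriv, ← key, ← key]
  exact ⟨(H.comp_hasDerivAt τ (a1.prodMk b1) :).deriv, (H.comp_hasDerivAt l (a2.prodMk b2) :).deriv⟩

/-- The three divergence-form identities in the proof of Theorem 3.2. -/
theorem stmt_2 (S₀ : ℝ → ℝ → ℝ)
    (hS₀ : ContDiff ℝ 2 fun p : ℝ × ℝ => S₀ p.1 p.2)
    (aP bP aM bM : ℝ → ℝ → ℝ)
    (haP : ContDiff ℝ 2 fun p : ℝ × ℝ => aP p.1 p.2)
    (hbP : ContDiff ℝ 2 fun p : ℝ × ℝ => bP p.1 p.2)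
    (haM : ContDiff ℝ 2 fun p : ℝ × ℝ => aM p.1 p.2)
    (hbM : ContDiff ℝ 2 fun p : ℝ × ℝ => bM p.1 p.2)
    (SP SM uP uM vP vM ωP ωM pstar pp istar ii jstar jj : ℝ → ℝ → ℝ)
    (hSP : ∀ τ l, SP τ l = S₀ (aP τ l) (bP τ l))
    (hSM : ∀ τ l, SM τ l = S₀ (aM τ l) (bM τ l))
    (huP : ∀ τ l, uP τ l = deriv (fun s => S₀ s (bP τ l)) (aP τ l))
    (huM : ∀ τ l, uM τ l = deriv (fun s => S₀ s (bM τ l)) (aM τ l))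
    (hvP : ∀ τ l, vP τ l = deriv (fun m => S₀ (aP τ l) m) (bP τ l))
    (hvM : ∀ τ l, vM τ l = deriv (fun m => S₀ (aM τ l) m) (bM τ l))
    (hωP : ∀ τ l, ωP τ l =
      deriv (fun s => aP s l) τ * deriv (fun m => bP τ m) l -
      deriv (fun s => bP s l) τ * deriv (fun m => aP τ m) l)
    (hωM : ∀ τ l, ωM τ l =
      deriv (fun s => aM s l) τ * deriv (fun m => bM τ m) l -
      deriv (fun s => bM s l) τ * deriv (fun m => aM τ m) l)
    (hpstar : ∀ τ l, pstar τ l =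
      (bP τ l - bM τ l) * (deriv (fun s => aP s l) τ + deriv (fun s => aM s l) τ) / 2 -
      (aP τ l - aM τ l) * (deriv (fun s => bP s l) τ + deriv (fun s => bM s l) τ) / 2)
    (hpp : ∀ τ l, pp τ l =
      (bP τ l - bM τ l) * (deriv (fun m => aP τ m) l + deriv (fun m => aM τ m) l) / 2 -
      (aP τ l - aM τ l) * (deriv (fun m => bP τ m) l + deriv (fun m => bM τ m) l) / 2)
    (histar : ∀ τ l, istar τ l =
      (bP τ l - bM τ l) * (deriv (fun s => SP s l) τ + deriv (fun s => SM s l) τ) / 2 -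
      (SP τ l - SM τ l) * (deriv (fun s => bP s l) τ + deriv (fun s => bM s l) τ) / 2)
    (hii : ∀ τ l, ii τ l =
      (bP τ l - bM τ l) * (deriv (fun m => SP τ m) l + deriv (fun m => SM τ m) l) / 2 -
      (SP τ l - SM τ l) * (deriv (fun m => bP τ m) l + deriv (fun m => bM τ m) l) / 2)
    (hjstar : ∀ τ l, jstar τ l =
      (aP τ l - aM τ l) * (deriv (fun s => SP s l) τ + deriv (fun s => SM s l) τ) / 2 -
      (SP τ l - SM τ l) * (deriv (fun s => aP s l) τ + deriv (fun s => aM s l) τ) / 2)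
    (hjj : ∀ τ l, jj τ l =
      (aP τ l - aM τ l) * (deriv (fun m => SP τ m) l + deriv (fun m => SM τ m) l) / 2 -
      (SP τ l - SM τ l) * (deriv (fun m => aP τ m) l + deriv (fun m => aM τ m) l) / 2) :
    ∀ τ l : ℝ,
      ωP τ l - ωM τ l =
        deriv (fun m => pstar τ m) l - deriv (fun s => pp s l) τ ∧
      uP τ l * ωP τ l - uM τ l * ωM τ l =
        deriv (fun m => istar τ m) l - deriv (fun s => ii s l) τ ∧
      -(vP τ l * ωP τ l - vM τ l * ωM τ l) =
        deriv (fun m => jstar τ m) l - deriv (fun s => jj s l) τ := by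
  intro τ l
  obtain ⟨cP, dP⟩ := comp_data S₀ aP bP SP hS₀ haP hbP hSP
  obtain ⟨cM, dM⟩ := comp_data S₀ aM bM SM hS₀ haM hbM hSM
  obtain ⟨p1, p2⟩ := dP τ l
  obtain ⟨m1, m2⟩ := dM τ l
  refine ⟨?_, ?_, ?_⟩
  · rw [core_id bP aP bM aM pstar pp hbP haP hbM haM hpstar hpp, hωP, hωM]
  · rw [core_id bP SP bM SM istar ii hbP cP hbM cM histar hii, hωP, hωM, huP, huM,
      p1, p2, m1, m2]
    ring
  · rw [core_id aP SP aM SM jstar jj haP cP haM cM hjstar hjj, hωP, hωM, hvP, hvM,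
      p1, p2, m1, m2]
    ring
end

section
/- Let S₀:ℝ²→ℝ be C² and for j∈{+,−} let a_j,b_j:ℝ²→ℝ be C² functions of (τ,l). Define S_j:=S₀(a_j,b_j), u_j:=∂₁S₀(a_j,b_j), v_j:=∂₂S₀(a_j,b_j), ω_j(τ,l):=∂_τa_j·∂_lb_j − ∂_τb_j·∂_la_j, and define p*, p, i*, i, j*, j by: p* := (b₊−b₋)(∂_τa₊+∂_τa₋)/2 − (a₊−a₋)(∂_τb₊+∂_τb₋)/2, p := (b₊−b₋)(∂_la₊+∂_la₋)/2 − (a₊−a₋)(∂_lb₊+∂_lb₋)/2, i* := (b₊−b₋)(∂_τS₊+∂_τS₋)/2 − (S₊−S₋)(∂_τb₊+∂_τb₋)/2, i := (b₊−b₋)(∂_lS₊+∂_lS₋)/2 − (S₊−S₋)(∂_lb₊+∂_lb₋)/2, j* := (a₊−a₋)(∂_τS₊+∂_τS₋)/2 − (S₊−S₋)(∂_τa₊+∂_τa₋)/2, j := (a₊−a₋)(∂_lS₊+∂_lS₋)/2 − (S₊−S₋)(∂_la₊+∂_la₋)/2. Set P̃(t,l):=∫₀ᵗ(ω₊−ω₋)dτ,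 Ĩ(t,l):=∫₀ᵗ(u₊ω₊−u₋ω₋)dτ, J̃(t,l):=∫₀ᵗ(v₊ω₊−v₋ω₋)dτ. Then for all (t,l): P̃(t,l) = ∂/∂l[∫₀ᵗ p*dτ] − p(t,l) + p(0,l); Ĩ(t,l) = ∂/∂l[∫₀ᵗ i*dτ] − i(t,l) + i(0,l); J̃(t,l) = −∂/∂l[∫₀ᵗ j*dτ] + j(t,l) − j(0,l). -/
open Set Filter Topology MeasureTheory

lemma aux_slice1 (F : ℝ × ℝ → ℝ) (x y : ℝ) (h : DifferentiableAt ℝ F (x, y)) :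
    HasDerivAt (fun s => F (s, y)) (fderiv ℝ F (x, y) (1, 0)) x :=
  h.hasFDerivAt.comp_hasDerivAt x ((hasDerivAt_id x).prodMk (hasDerivAt_const x y))

lemma aux_slice2 (F : ℝ × ℝ → ℝ) (x y : ℝ) (h : DifferentiableAt ℝ F (x, y)) :
    HasDerivAt (fun s => F (x, s)) (fderiv ℝ F (x, y) (0, 1)) y :=
  h.hasFDerivAt.comp_hasDerivAt y ((hasDerivAt_const y x).prodMk (hasDerivAt_id y))

lemma aux_partials (f : ℝ → ℝ → ℝ) (hf : ContDiff ℝ 2 fun p : ℝ × ℝ => f p.1 p.2) :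
    ∃ ft fl fm : ℝ → ℝ → ℝ,
      (Continuous fun p : ℝ × ℝ => f p.1 p.2) ∧ (Continuous fun p : ℝ × ℝ => ft p.1 p.2) ∧
      (Continuous fun p : ℝ × ℝ => fl p.1 p.2) ∧ (Continuous fun p : ℝ × ℝ => fm p.1 p.2) ∧
      (∀ x y, HasDerivAt (fun s => f s y) (ft x y) x) ∧
      (∀ x y, HasDerivAt (fun s => f x s) (fl x y) y) ∧
      (∀ x y, HasDerivAt (fun s => ft x s) (fm x y) y) ∧
      (∀ x y, HasDerivAt (fun s => fl s y) (fm x y) x) := by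
  set F : ℝ × ℝ → ℝ := fun p => f p.1 p.2 with hF
  have hd : Differentiable ℝ F := hf.differentiable (by norm_num)
  have h1 : ContDiff ℝ 1 (fderiv ℝ F) := hf.fderiv_right (by norm_num)
  have hd1 : Differentiable ℝ (fderiv ℝ F) := h1.differentiable (by norm_num)
  have h2 : Continuous (fderiv ℝ (fderiv ℝ F)) := h1.continuous_fderiv (by norm_num)
  have key : ∀ (v w p : ℝ × ℝ), fderiv ℝ (fun q => fderiv ℝ F q v) p w
      = fderiv ℝ (fderiv ℝ F) p w v := by
    intro v w p
    rw [fderiv_clm_apply (hd1 p) (differentiableAt_const v)]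
    simp
  have hdv : ∀ v : ℝ × ℝ, Differentiable ℝ (fun q => fderiv ℝ F q v) := fun v =>
    hd1.clm_apply (differentiable_const v)
  refine ⟨fun x y => fderiv ℝ F (x, y) (1, 0), fun x y => fderiv ℝ F (x, y) (0, 1),
    fun x y => fderiv ℝ (fderiv ℝ F) (x, y) (0, 1) (1, 0), hf.continuous,
    h1.continuous.clm_apply continuous_const, h1.continuous.clm_apply continuous_const,
    (h2.clm_apply continuous_const).clm_apply continuous_const, ?_, ?_, ?_, ?_⟩
  · intro x y
    exact aux_slice1 F x y (hd _)
  · intro x y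
    exact aux_slice2 F x y (hd _)
  · intro x y
    have := aux_slice2 (fun q => fderiv ℝ F q (1, 0)) x y (hdv _ _)
    rwa [key] at this
  · intro x y
    have := aux_slice1 (fun q => fderiv ℝ F q (0, 1)) x y (hdv _ _)
    rw [key] at this
    have hs : IsSymmSndFDerivAt ℝ F (x, y) := hf.contDiffAt.isSymmSndFDerivAt (by simp)
    rwa [hs] at this

lemma aux_leibniz (q ql : ℝ → ℝ → ℝ) (hq : Continuous fun p : ℝ × ℝ => q p.1 p.2)
    (hql : Continuous fun p : ℝ × ℝ => ql p.1 p.2)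
    (hd : ∀ x y, HasDerivAt (fun s => q x s) (ql x y) y) (t l : ℝ) :
    HasDerivAt (fun m => ∫ τ in (0:ℝ)..t, q τ m) (∫ τ in (0:ℝ)..t, ql τ l) l := by
  obtain ⟨C, hC⟩ := ((isCompact_uIcc (a := (0:ℝ)) (b := t)).prod
    (isCompact_closedBall l 1)).exists_bound_of_continuousOn hql.continuousOn
  have c1 : ∀ m, Continuous fun τ => q τ m := fun m =>
    hq.comp (continuous_id.prodMk continuous_const)
  have c2 : ∀ m, Continuous fun τ => ql τ m := fun m =>
    hql.comp (continuous_id.prodMk continuous_const)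
  refine (intervalIntegral.hasDerivAt_integral_of_dominated_loc_of_deriv_le
    (F := fun m τ => q τ m) (F' := fun m τ => ql τ m) (bound := fun _ => C)
    (Metric.closedBall_mem_nhds l one_pos)
    (Eventually.of_forall fun m => (c1 m).aestronglyMeasurable)
    ((c1 l).intervalIntegrable _ _) (c2 l).aestronglyMeasurable
    (Eventually.of_forall fun τ hτ m hm => hC (τ, m) ⟨uIoc_subset_uIcc hτ, hm⟩)
    intervalIntegrable_const
    (Eventually.of_forall fun τ _ m _ => hd τ m)).2

lemma aux_main_s4 (f g h k : ℝ → ℝ → ℝ)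
    (hf : ContDiff ℝ 2 fun p : ℝ × ℝ => f p.1 p.2)
    (hg : ContDiff ℝ 2 fun p : ℝ × ℝ => g p.1 p.2)
    (hh : ContDiff ℝ 2 fun p : ℝ × ℝ => h p.1 p.2)
    (hk : ContDiff ℝ 2 fun p : ℝ × ℝ => k p.1 p.2)
    (qs q : ℝ → ℝ → ℝ)
    (hqs : ∀ τ l, qs τ l =
      (g τ l - k τ l) * (deriv (fun s => f s l) τ + deriv (fun s => h s l) τ) / 2 -
      (f τ l - h τ l) * (deriv (fun s => g s l) τ + deriv (fun s => k s l) τ) / 2)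
    (hq : ∀ τ l, q τ l =
      (g τ l - k τ l) * (deriv (fun m => f τ m) l + deriv (fun m => h τ m) l) / 2 -
      (f τ l - h τ l) * (deriv (fun m => g τ m) l + deriv (fun m => k τ m) l) / 2)
    (t l : ℝ) :
    ∫ τ in (0:ℝ)..t, ((deriv (fun s => f s l) τ * deriv (fun m => g τ m) l -
      deriv (fun s => g s l) τ * deriv (fun m => f τ m) l) -
      (deriv (fun s => h s l) τ * deriv (fun m => k τ m) l -
      deriv (fun s => k s l) τ * deriv (fun m => h τ m) l))
    = deriv (fun m => ∫ τ in (0:ℝ)..t, qs τ m) l - q t l + q 0 l := by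
  obtain ⟨ft, fl, fm, cf, cft, cfl, cfm, df1, df2, df3, df4⟩ := aux_partials f hf
  obtain ⟨gt, gl, gm, cg, cgt, cgl, cgm, dg1, dg2, dg3, dg4⟩ := aux_partials g hg
  obtain ⟨ht, hl, hm, ch, cht, chl, chm, dh1, dh2, dh3, dh4⟩ := aux_partials h hh
  obtain ⟨kt, kl, km, ck, ckt, ckl, ckm, dk1, dk2, dk3, dk4⟩ := aux_partials k hk
  simp only [(df1 _ _).deriv, (df2 _ _).deriv, (dg1 _ _).deriv, (dg2 _ _).deriv,
    (dh1 _ _).deriv, (dh2 _ _).deriv, (dk1 _ _).deriv, (dk2 _ _).deriv] at hqs hq ⊢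
  obtain rfl : qs = fun τ l => (g τ l - k τ l) * (ft τ l + ht τ l) / 2 -
      (f τ l - h τ l) * (gt τ l + kt τ l) / 2 := by
    funext τ l; exact hqs τ l
  let qsl : ℝ → ℝ → ℝ := fun τ l =>
    ((gl τ l - kl τ l) * (ft τ l + ht τ l) + (g τ l - k τ l) * (fm τ l + hm τ l)) / 2 -
    ((fl τ l - hl τ l) * (gt τ l + kt τ l) + (f τ l - h τ l) * (gm τ l + km τ l)) / 2
  let qt : ℝ → ℝ → ℝ := fun τ l =>
    ((gt τ l - kt τ l) * (fl τ l + hl τ l) + (g τ l - k τ l) * (fm τ l + hm τ l)) / 2 -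
    ((ft τ l - ht τ l) * (gl τ l + kl τ l) + (f τ l - h τ l) * (gm τ l + km τ l)) / 2
  have cqsl : Continuous fun p : ℝ × ℝ => qsl p.1 p.2 := by
    simp only [qsl]; fun_prop
  have cqt : Continuous fun p : ℝ × ℝ => qt p.1 p.2 := by
    simp only [qt]; fun_prop
  have L := aux_leibniz (fun τ l => (g τ l - k τ l) * (ft τ l + ht τ l) / 2 -
      (f τ l - h τ l) * (gt τ l + kt τ l) / 2) qsl (by fun_prop) cqsl
    (fun x y => ((((dg2 x y).sub (dk2 x y)).mul ((df3 x y).add (dh3 x y))).div_const 2).sub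
      ((((df2 x y).sub (dh2 x y)).mul ((dg3 x y).add (dk3 x y))).div_const 2)) t l
  rw [L.deriv]
  have sl : Continuous fun τ : ℝ => (τ, l) := continuous_id.prodMk continuous_const
  have c1 : Continuous fun τ => qsl τ l := cqsl.comp sl
  have c2 : Continuous fun τ => qt τ l := cqt.comp sl
  have T : ∫ τ in (0:ℝ)..t, qt τ l = q t l - q 0 l := by
    refine intervalIntegral.integral_eq_sub_of_hasDerivAt (f := fun τ => q τ l)
      (fun x _ => ?_) (c2.intervalIntegrable _ _)
    have e : (fun τ => q τ l) = fun τ => (g τ l - k τ l) * (fl τ l + hl τ l) / 2 -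
      (f τ l - h τ l) * (gl τ l + kl τ l) / 2 := by
      funext τ; exact hq τ l
    rw [e]
    exact ((((dg1 x l).sub (dk1 x l)).mul ((df4 x l).add (dh4 x l))).div_const 2).sub
      ((((df1 x l).sub (dh1 x l)).mul ((dg4 x l).add (dk4 x l))).div_const 2)
  have : ∀ A B C : ℝ, A - (B - C) = A - B + C := by intros; ring
  rw [← this, ← T, ← intervalIntegral.integral_sub (c1.intervalIntegrable _ _)
    (c2.intervalIntegrable _ _)]
  congr 1
  funext τ
  simp only [qsl, qt]
  ring

lemma aux_chain (S₀ a b : ℝ → ℝ → ℝ)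
    (hS₀ : ContDiff ℝ 2 fun p : ℝ × ℝ => S₀ p.1 p.2)
    (ha : ContDiff ℝ 2 fun p : ℝ × ℝ => a p.1 p.2)
    (hb : ContDiff ℝ 2 fun p : ℝ × ℝ => b p.1 p.2) (τ l : ℝ) :
    deriv (fun s => S₀ (a s l) (b s l)) τ =
      deriv (fun s => S₀ s (b τ l)) (a τ l) * deriv (fun s => a s l) τ +
      deriv (fun m => S₀ (a τ l) m) (b τ l) * deriv (fun s => b s l) τ ∧
    deriv (fun m => S₀ (a τ m) (b τ m)) l =
      deriv (fun s => S₀ s (b τ l)) (a τ l) * deriv (fun m => a τ m) l +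
      deriv (fun m => S₀ (a τ l) m) (b τ l) * deriv (fun m => b τ m) l := by
  obtain ⟨at', al, _, _, _, _, _, da1, da2, _, _⟩ := aux_partials a ha
  obtain ⟨bt, bl, _, _, _, _, _, db1, db2, _, _⟩ := aux_partials b hb
  set F : ℝ × ℝ → ℝ := fun p => S₀ p.1 p.2 with hF
  have hd : DifferentiableAt ℝ F (a τ l, b τ l) := hS₀.differentiable (by norm_num) _
  have e1 : deriv (fun s => S₀ s (b τ l)) (a τ l) = _ := (aux_slice1 F _ _ hd).deriv
  have e2 : deriv (fun m => S₀ (a τ l) m) (b τ l) = _ := (aux_slice2 F _ _ hd).deriv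
  have lin : ∀ x y : ℝ, fderiv ℝ F (a τ l, b τ l) (x, y) =
      fderiv ℝ F (a τ l, b τ l) (1, 0) * x + fderiv ℝ F (a τ l, b τ l) (0, 1) * y := by
    intro x y
    have : ((x, y) : ℝ × ℝ) = x • (1, 0) + y • (0, 1) := by simp
    rw [this, map_add, map_smul, map_smul]
    simp [mul_comm]
  rw [e1, e2, (da1 _ _).deriv, (da2 _ _).deriv, (db1 _ _).deriv, (db2 _ _).deriv, ← lin, ← lin]
  have r1 := HasFDerivAt.comp_hasDerivAt (l := F) (f := fun s => (a s l, b s l)) τ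
    hd.hasFDerivAt ((da1 τ l).prodMk (db1 τ l))
  have r2 := HasFDerivAt.comp_hasDerivAt (l := F) (f := fun m => (a τ m, b τ m)) l
    hd.hasFDerivAt ((da2 τ l).prodMk (db2 τ l))
  exact ⟨r1.deriv, r2.deriv⟩

/-- Theorem 3.2 of the paper (ρ₀ ≡ 1, potential initial velocity): integral
representations of the accumulated shock mass and momenta `P̃, Ĩ, J̃`. -/
theorem stmt_4 (S₀ : ℝ → ℝ → ℝ)
    (hS₀ : ContDiff ℝ 2 fun p : ℝ × ℝ => S₀ p.1 p.2)
    (aP bP aM bM : ℝ → ℝ → ℝ)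
    (haP : ContDiff ℝ 2 fun p : ℝ × ℝ => aP p.1 p.2)
    (hbP : ContDiff ℝ 2 fun p : ℝ × ℝ => bP p.1 p.2)
    (haM : ContDiff ℝ 2 fun p : ℝ × ℝ => aM p.1 p.2)
    (hbM : ContDiff ℝ 2 fun p : ℝ × ℝ => bM p.1 p.2)
    (SP SM uP uM vP vM ωP ωM pstar pp istar ii jstar jj : ℝ → ℝ → ℝ)
    (hSP : ∀ τ l, SP τ l = S₀ (aP τ l) (bP τ l))
    (hSM : ∀ τ l, SM τ l = S₀ (aM τ l) (bM τ l))
    (huP : ∀ τ l, uP τ l = deriv (fun s => S₀ s (bP τ l)) (aP τ l))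
    (huM : ∀ τ l, uM τ l = deriv (fun s => S₀ s (bM τ l)) (aM τ l))
    (hvP : ∀ τ l, vP τ l = deriv (fun m => S₀ (aP τ l) m) (bP τ l))
    (hvM : ∀ τ l, vM τ l = deriv (fun m => S₀ (aM τ l) m) (bM τ l))
    (hωP : ∀ τ l, ωP τ l =
      deriv (fun s => aP s l) τ * deriv (fun m => bP τ m) l -
      deriv (fun s => bP s l) τ * deriv (fun m => aP τ m) l)
    (hωM : ∀ τ l, ωM τ l =
      deriv (fun s => aM s l) τ * deriv (fun m => bM τ m) l -
      deriv (fun s => bM s l) τ * deriv (fun m => aM τ m) l)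
    (hpstar : ∀ τ l, pstar τ l =
      (bP τ l - bM τ l) * (deriv (fun s => aP s l) τ + deriv (fun s => aM s l) τ) / 2 -
      (aP τ l - aM τ l) * (deriv (fun s => bP s l) τ + deriv (fun s => bM s l) τ) / 2)
    (hpp : ∀ τ l, pp τ l =
      (bP τ l - bM τ l) * (deriv (fun m => aP τ m) l + deriv (fun m => aM τ m) l) / 2 -
      (aP τ l - aM τ l) * (deriv (fun m => bP τ m) l + deriv (fun m => bM τ m) l) / 2)
    (histar : ∀ τ l, istar τ l =
      (bP τ l - bM τ l) * (deriv (fun s => SP s l) τ + deriv (fun s => SM s l) τ) / 2 -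
      (SP τ l - SM τ l) * (deriv (fun s => bP s l) τ + deriv (fun s => bM s l) τ) / 2)
    (hii : ∀ τ l, ii τ l =
      (bP τ l - bM τ l) * (deriv (fun m => SP τ m) l + deriv (fun m => SM τ m) l) / 2 -
      (SP τ l - SM τ l) * (deriv (fun m => bP τ m) l + deriv (fun m => bM τ m) l) / 2)
    (hjstar : ∀ τ l, jstar τ l =
      (aP τ l - aM τ l) * (deriv (fun s => SP s l) τ + deriv (fun s => SM s l) τ) / 2 -
      (SP τ l - SM τ l) * (deriv (fun s => aP s l) τ + deriv (fun s => aM s l) τ) / 2)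
    (hjj : ∀ τ l, jj τ l =
      (aP τ l - aM τ l) * (deriv (fun m => SP τ m) l + deriv (fun m => SM τ m) l) / 2 -
      (SP τ l - SM τ l) * (deriv (fun m => aP τ m) l + deriv (fun m => aM τ m) l) / 2)
    (Pt It Jt : ℝ → ℝ → ℝ)
    (hPt : ∀ t l, Pt t l = ∫ τ in (0:ℝ)..t, (ωP τ l - ωM τ l))
    (hIt : ∀ t l, It t l = ∫ τ in (0:ℝ)..t, (uP τ l * ωP τ l - uM τ l * ωM τ l))
    (hJt : ∀ t l, Jt t l = ∫ τ in (0:ℝ)..t, (vP τ l * ωP τ l - vM τ l * ωM τ l)) :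
    ∀ t l : ℝ,
      Pt t l = deriv (fun m => ∫ τ in (0:ℝ)..t, pstar τ m) l - pp t l + pp 0 l ∧
      It t l = deriv (fun m => ∫ τ in (0:ℝ)..t, istar τ m) l - ii t l + ii 0 l ∧
      Jt t l = -deriv (fun m => ∫ τ in (0:ℝ)..t, jstar τ m) l + jj t l - jj 0 l := by
  obtain rfl : SP = fun τ l => S₀ (aP τ l) (bP τ l) := by funext τ l; exact hSP τ l
  obtain rfl : SM = fun τ l => S₀ (aM τ l) (bM τ l) := by funext τ l; exact hSM τ l
  have cSP : ContDiff ℝ 2 fun p : ℝ × ℝ => S₀ (aP p.1 p.2) (bP p.1 p.2) :=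
    hS₀.comp (haP.prodMk hbP)
  have cSM : ContDiff ℝ 2 fun p : ℝ × ℝ => S₀ (aM p.1 p.2) (bM p.1 p.2) :=
    hS₀.comp (haM.prodMk hbM)
  intro t l
  refine ⟨?_, ?_, ?_⟩
  · rw [← aux_main_s4 aP bP aM bM haP hbP haM hbM pstar pp hpstar hpp t l, hPt]
    simp only [hωP, hωM]
  · rw [← aux_main_s4 _ bP _ bM cSP hbP cSM hbM istar ii histar hii t l, hIt]
    congr 1
    funext τ
    obtain ⟨p1, p2⟩ := aux_chain S₀ aP bP hS₀ haP hbP τ l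
    obtain ⟨m1, m2⟩ := aux_chain S₀ aM bM hS₀ haM hbM τ l
    rw [p1, p2, m1, m2, hωP, hωM, huP, huM]
    ring
  · have key := aux_main_s4 _ aP _ aM cSP haP cSM haM jstar jj hjstar hjj t l
    have : Jt t l = -(deriv (fun m => ∫ τ in (0:ℝ)..t, jstar τ m) l - jj t l + jj 0 l) := by
      rw [← key, hJt, ← intervalIntegral.integral_neg]
      congr 1
      funext τ
      obtain ⟨p1, p2⟩ := aux_chain S₀ aP bP hS₀ haP hbP τ l
      obtain ⟨m1, m2⟩ := aux_chain S₀ aM bM hS₀ haM hbM τ l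
      rw [p1, p2, m1, m2, hωP, hωM, hvP, hvM]
      ring
    rw [this]
    ring
end

section
/- Let u,v:ℝ²→ℝ be C¹, let ρ₀:ℝ²→ℝ be a function, and let a,b:ℝ²→ℝ be differentiable functions of (t,l). Define x(t,l):=a+t·u(a,b), y(t,l):=b+t·v(a,b), D(t,l):=(1+t·∂₁u(a,b))(1+t·∂₂v(a,b)) − t²·∂₂u(a,b)·∂₁v(a,b), and suppose D(t,l)≠0; set ρ(t,l):=ρ₀(a,b)/D(t,l). Then at every point: ρ·[∂_lx·(∂_ty − v(a,b)) + ∂_ly·(u(a,b) − ∂_tx)] = −ρ₀(a,b)·(∂_ta·∂_lb − ∂_tb·∂_la). -/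
theorem chain_aux (w : ℝ → ℝ → ℝ)
    (hw : Differentiable ℝ fun p : ℝ × ℝ => w p.1 p.2) (f g : ℝ → ℝ) (f' g' s : ℝ)
    (hf : HasDerivAt f f' s) (hg : HasDerivAt g g' s) :
    HasDerivAt (fun r => w (f r) (g r))
      (deriv (fun r => w r (g s)) (f s) * f' + deriv (fun m => w (f s) m) (g s) * g') s := by
  have hW := (hw (f s, g s)).hasFDerivAt
  set L := fderiv ℝ (fun p : ℝ × ℝ => w p.1 p.2) (f s, g s) with hL
  have key : ∀ (f₁ g₁ : ℝ → ℝ) (f₁' g₁' r : ℝ), HasDerivAt f₁ f₁' r → HasDerivAt g₁ g₁' r →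
      f₁ r = f s → g₁ r = g s → HasDerivAt (fun r => w (f₁ r) (g₁ r)) (L (f₁', g₁')) r := by
    intro f₁ g₁ f₁' g₁' r h1 h2 e1 e2
    have hW' : HasFDerivAt (fun p : ℝ × ℝ => w p.1 p.2) L (f₁ r, g₁ r) := by
      rw [e1, e2]; exact hW
    exact hW'.comp_hasDerivAt r (h1.prodMk h2)
  have k1 := (key (fun r => r) (fun _ => g s) 1 0 (f s) (hasDerivAt_id _)
    (hasDerivAt_const _ _) rfl rfl).deriv
  have k2 := (key (fun _ => f s) (fun r => r) 0 1 (g s) (hasDerivAt_const _ _)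
    (hasDerivAt_id _) rfl rfl).deriv
  have k := key f g f' g' s hf hg rfl rfl
  have e : ((f', g') : ℝ × ℝ) = f' • (1, 0) + g' • (0, 1) := by simp
  rw [e, map_add, map_smul, map_smul, ← k1, ← k2] at k
  simpa [mul_comm] using k

/-- Key algebraic identity in the proof of Theorem 4.1: the mass flux across the
curve `(x(t,l), y(t,l))` equals the rate of swept Lagrangian area. -/
theorem stmt_5 (u v ρ₀ : ℝ → ℝ → ℝ)
    (hu : ContDiff ℝ 1 fun p : ℝ × ℝ => u p.1 p.2)
    (hv : ContDiff ℝ 1 fun p : ℝ × ℝ => v p.1 p.2)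
    (a b : ℝ → ℝ → ℝ)
    (ha : Differentiable ℝ fun p : ℝ × ℝ => a p.1 p.2)
    (hb : Differentiable ℝ fun p : ℝ × ℝ => b p.1 p.2)
    (x y D ρ : ℝ → ℝ → ℝ)
    (hx : ∀ t l, x t l = a t l + t * u (a t l) (b t l))
    (hy : ∀ t l, y t l = b t l + t * v (a t l) (b t l))
    (hD : ∀ t l, D t l =
      (1 + t * deriv (fun s => u s (b t l)) (a t l)) *
        (1 + t * deriv (fun m => v (a t l) m) (b t l)) -
      t ^ 2 * deriv (fun m => u (a t l) m) (b t l) *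
        deriv (fun s => v s (b t l)) (a t l))
    (hDne : ∀ t l : ℝ, D t l ≠ 0)
    (hρ : ∀ t l, ρ t l = ρ₀ (a t l) (b t l) / D t l) :
    ∀ t l : ℝ,
      ρ t l * (deriv (fun m => x t m) l *
          (deriv (fun s => y s l) t - v (a t l) (b t l)) +
        deriv (fun m => y t m) l *
          (u (a t l) (b t l) - deriv (fun s => x s l) t)) =
      -(ρ₀ (a t l) (b t l) *
        (deriv (fun s => a s l) t * deriv (fun m => b t m) l -
         deriv (fun s => b s l) t * deriv (fun m => a t m) l)) := by
  intro t l
  have hu' := hu.differentiable (by norm_num)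
  have hv' := hv.differentiable (by norm_num)
  have sl : ∀ c : ℝ → ℝ → ℝ, (Differentiable ℝ fun p : ℝ × ℝ => c p.1 p.2) →
      HasDerivAt (fun s => c s l) (deriv (fun s => c s l) t) t ∧
      HasDerivAt (fun m => c t m) (deriv (fun m => c t m) l) l := by
    intro c hc
    exact ⟨(chain_aux c hc (fun s => s) (fun _ => l) 1 0 t (hasDerivAt_id _)
        (hasDerivAt_const _ _)).differentiableAt.hasDerivAt,
      (chain_aux c hc (fun _ => t) (fun s => s) 0 1 l (hasDerivAt_const _ _)
        (hasDerivAt_id _)).differentiableAt.hasDerivAt⟩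
  obtain ⟨at', al'⟩ := sl a ha
  obtain ⟨bt', bl'⟩ := sl b hb
  have xt := (at'.add ((hasDerivAt_id' t).mul (chain_aux u hu' _ _ _ _ t at' bt'))).deriv
  have yt := (bt'.add ((hasDerivAt_id' t).mul (chain_aux v hv' _ _ _ _ t at' bt'))).deriv
  have xl := (al'.add ((chain_aux u hu' _ _ _ _ l al' bl').const_mul t)).deriv
  have yl := (bl'.add ((chain_aux v hv' _ _ _ _ l al' bl').const_mul t)).deriv
  have ext : (fun s => x s l) = _ := funext fun s => hx s l
  have exl : (fun s => x t s) = _ := funext fun s => hx t s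
  have eyt : (fun s => y s l) = _ := funext fun s => hy s l
  have eyl : (fun s => y t s) = _ := funext fun s => hy t s
  have xt2 := (congrArg (fun f => deriv f t) ext).trans xt
  have yt2 := (congrArg (fun f => deriv f t) eyt).trans yt
  have xl2 := (congrArg (fun f => deriv f l) exl).trans xl
  have yl2 := (congrArg (fun f => deriv f l) eyl).trans yl
  have hd := hDne t l
  have hD' := hD t l
  beta_reduce at xt2 yt2 xl2 yl2
  rw [xt2, yt2, xl2, yl2, hρ, div_mul_eq_mul_div, div_eq_iff hd, hD']
  ring
end

section
/- Let u,v,ρ,ρ̃∈ℝ and T>0. Let P,I,J,x,y:[0,T)×ℝ→ℝ be differentiable in t with ∂_lx and ∂_ly existing, P(t,l)>0, and suppose they satisfy the system: ∂_tP + (ρ−ρ̃)(∂_ly·U − ∂_lx·V) − ρ(∂_ly·u − ∂_lx·v) = 0; ∂_tI + ρu(∂_ly·U − ∂_lx·V) − ρu(∂_ly·u − ∂_lx·v) = 0; ∂_tJ + ρv(∂_ly·U − ∂_lx·V) − ρv(∂_ly·u − ∂_lx·v) = 0; ∂_tx = U := I/P and ∂_ty = V := J/P. Then for all (t,l): u·J(t,l)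 − v·I(t,l) = u·J(0,l) − v·I(0,l) =: C(l), and u·∂_ty(t,l) − v·∂_tx(t,l) = C(l)/P(t,l). -/
/-- First integrals (30), (31) of the intra-shock system (29) with constant
external states. -/
theorem stmt_7 (u v ρ ρt T : ℝ) (hT : 0 < T)
    (P I J x y : ℝ → ℝ → ℝ)
    (hPpos : ∀ t ∈ Set.Ico (0:ℝ) T, ∀ l : ℝ, 0 < P t l)
    (hPd : ∀ t ∈ Set.Ico (0:ℝ) T, ∀ l : ℝ, DifferentiableAt ℝ (fun s => P s l) t)
    (hId : ∀ t ∈ Set.Ico (0:ℝ) T, ∀ l : ℝ, DifferentiableAt ℝ (fun s => I s l) t)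
    (hJd : ∀ t ∈ Set.Ico (0:ℝ) T, ∀ l : ℝ, DifferentiableAt ℝ (fun s => J s l) t)
    (hxd : ∀ t ∈ Set.Ico (0:ℝ) T, ∀ l : ℝ, DifferentiableAt ℝ (fun s => x s l) t)
    (hyd : ∀ t ∈ Set.Ico (0:ℝ) T, ∀ l : ℝ, DifferentiableAt ℝ (fun s => y s l) t)
    (hxl : ∀ t ∈ Set.Ico (0:ℝ) T, ∀ l : ℝ, DifferentiableAt ℝ (fun m => x t m) l)
    (hyl : ∀ t ∈ Set.Ico (0:ℝ) T, ∀ l : ℝ, DifferentiableAt ℝ (fun m => y t m) l)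
    (heqP : ∀ t ∈ Set.Ico (0:ℝ) T, ∀ l : ℝ,
      deriv (fun s => P s l) t +
        (ρ - ρt) * (deriv (fun m => y t m) l * (I t l / P t l) -
          deriv (fun m => x t m) l * (J t l / P t l)) -
        ρ * (deriv (fun m => y t m) l * u - deriv (fun m => x t m) l * v) = 0)
    (heqI : ∀ t ∈ Set.Ico (0:ℝ) T, ∀ l : ℝ,
      deriv (fun s => I s l) t +
        ρ * u * (deriv (fun m => y t m) l * (I t l / P t l) -
          deriv (fun m => x t m) l * (J t l / P t l)) -
        ρ * u * (deriv (fun m => y t m) l * u - deriv (fun m => x t m) l * v) = 0)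
    (heqJ : ∀ t ∈ Set.Ico (0:ℝ) T, ∀ l : ℝ,
      deriv (fun s => J s l) t +
        ρ * v * (deriv (fun m => y t m) l * (I t l / P t l) -
          deriv (fun m => x t m) l * (J t l / P t l)) -
        ρ * v * (deriv (fun m => y t m) l * u - deriv (fun m => x t m) l * v) = 0)
    (hxt : ∀ t ∈ Set.Ico (0:ℝ) T, ∀ l : ℝ,
      deriv (fun s => x s l) t = I t l / P t l)
    (hyt : ∀ t ∈ Set.Ico (0:ℝ) T, ∀ l : ℝ,
      deriv (fun s => y s l) t = J t l / P t l) :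
    ∀ t ∈ Set.Ico (0:ℝ) T, ∀ l : ℝ,
      u * J t l - v * I t l = u * J 0 l - v * I 0 l ∧
      u * deriv (fun s => y s l) t - v * deriv (fun s => x s l) t =
        (u * J 0 l - v * I 0 l) / P t l := by
  intro t ht l
  have hD : ∀ s ∈ Set.Ico (0:ℝ) T,
      HasDerivAt (fun s => u * J s l - v * I s l) 0 s := by
    intro s hs
    have h := ((hJd s hs l).hasDerivAt.const_mul u).sub ((hId s hs l).hasDerivAt.const_mul v)
    have e : u * deriv (fun s => J s l) s - v * deriv (fun s => I s l) s = 0 := by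
      linear_combination u * heqJ s hs l - v * heqI s hs l
    rw [e] at h
    exact h
  have hsub : ∀ s ∈ Set.Icc (0:ℝ) t, s ∈ Set.Ico (0:ℝ) T :=
    fun s hs => ⟨hs.1, lt_of_le_of_lt hs.2 ht.2⟩
  have key : u * J t l - v * I t l = u * J 0 l - v * I 0 l :=
    constant_of_has_deriv_right_zero (f := fun s => u * J s l - v * I s l) (a := 0) (b := t)
      (fun s hs => (hD s (hsub s hs)).continuousAt.continuousWithinAt)
      (fun s hs => (hD s (hsub s ⟨hs.1, hs.2.le⟩)).hasDerivWithinAt) t ⟨ht.1, le_rfl⟩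
  refine ⟨key, ?_⟩
  rw [← key, hxt t ht l, hyt t ht l]
  ring
end

section
/- In the setting of the previous system, assume additionally that x and y are C², that u·J(0,l) − v·I(0,l) = 0 for all l, that (u,v)≠(0,0), and that there is a function k(t,l) with I = k·u and J = k·v. Then: (i) ∂_t(u·∂_ly − v·∂_lx) = 0, so G(l) := u·∂_ly(t,l) − v·∂_lx(t,l) is independent of t; (ii) setting k̂ := k/P, one has ∂_tP + G(l)·(k̂(ρ−ρ̃) − ρ) = 0 and ∂_t(P·k̂) + ρ·G(l)·(k̂ − 1) = 0. -/
theorem clm_aux (F : ℝ × ℝ → (ℝ × ℝ →L[ℝ] ℝ)) (F' : ℝ × ℝ →L[ℝ] (ℝ × ℝ →L[ℝ] ℝ))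
    (c : ℝ → ℝ × ℝ) (t : ℝ) (c' w : ℝ × ℝ)
    (hF : HasFDerivAt F F' (c t)) (hc : HasDerivAt c c' t) :
    HasDerivAt (fun s => F (c s) w) (F' c' w) t := by
  have h1 : HasDerivAt (fun s => F (c s)) (F' c') t := hF.comp_hasDerivAt t hc
  exact ((ContinuousLinearMap.apply ℝ ℝ w).hasFDerivAt (x := F (c t))).comp_hasDerivAt t h1

theorem mixed_aux (W : ℝ × ℝ → ℝ) (hW : ContDiff ℝ 2 W) (t l : ℝ)
    (h : ∀ m, deriv (fun s => W (s, m)) t = 0) :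
    HasDerivAt (fun s => deriv (fun m => W (s, m)) l) 0 t := by
  have hd : ∀ p, HasFDerivAt W (fderiv ℝ W p) p := fun p =>
    (hW.differentiable (by norm_num) p).hasFDerivAt
  have hF : ContDiff ℝ 1 (fderiv ℝ W) := hW.fderiv_right (by norm_num)
  have hFd : ∀ p, HasFDerivAt (fderiv ℝ W) (fderiv ℝ (fderiv ℝ W) p) p := fun p =>
    (hF.differentiable (by norm_num) p).hasFDerivAt
  have c1 : ∀ s m : ℝ, HasDerivAt (fun s : ℝ => (s, m)) ((1:ℝ), (0:ℝ)) s := fun s m =>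
    (hasDerivAt_id s).prodMk (hasDerivAt_const s m)
  have c2 : ∀ s m : ℝ, HasDerivAt (fun m : ℝ => (s, m)) ((0:ℝ), (1:ℝ)) m := fun s m =>
    (hasDerivAt_const m s).prodMk (hasDerivAt_id m)
  have d1 : ∀ s m, deriv (fun s => W (s, m)) s = fderiv ℝ W (s, m) (1, 0) := fun s m =>
    ((hd (s, m)).comp_hasDerivAt s (c1 s m)).deriv
  have d2 : ∀ s m, deriv (fun m => W (s, m)) m = fderiv ℝ W (s, m) (0, 1) := fun s m =>
    ((hd (s, m)).comp_hasDerivAt m (c2 s m)).deriv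
  have e1 : HasDerivAt (fun s => fderiv ℝ W (s, l) (0, 1))
      (fderiv ℝ (fderiv ℝ W) (t, l) (1, 0) (0, 1)) t := by
    exact clm_aux _ _ (fun s : ℝ => (s, l)) t _ _ (hFd (t, l)) (c1 t l)
  have e2 : HasDerivAt (fun m => fderiv ℝ W (t, m) (1, 0))
      (fderiv ℝ (fderiv ℝ W) (t, l) (0, 1) (1, 0)) l := by
    exact clm_aux _ _ (fun m : ℝ => (t, m)) l _ _ (hFd (t, l)) (c2 t l)
  have e3 : (fun m => fderiv ℝ W (t, m) (1, 0)) = fun _ => (0:ℝ) := by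
    funext m
    rw [← d1, h]
  rw [e3] at e2
  have e4 := e2.unique (hasDerivAt_const l (0:ℝ))
  have sym : IsSymmSndFDerivAt ℝ W (t, l) :=
    hW.contDiffAt.isSymmSndFDerivAt (by simp)
  rw [sym.eq, e4] at e1
  simpa only [d2] using e1

/-- Reduction of the intra-shock system (29) to the closed 1-D system (33) when
the first integral `uJ - vI` vanishes identically at `t = 0`. -/
theorem stmt_8 (u v ρ ρt T : ℝ) (hT : 0 < T)
    (P I J x y : ℝ → ℝ → ℝ)
    (hPpos : ∀ t ∈ Set.Ico (0:ℝ) T, ∀ l : ℝ, 0 < P t l)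
    (hPd : ∀ t ∈ Set.Ico (0:ℝ) T, ∀ l : ℝ, DifferentiableAt ℝ (fun s => P s l) t)
    (hId : ∀ t ∈ Set.Ico (0:ℝ) T, ∀ l : ℝ, DifferentiableAt ℝ (fun s => I s l) t)
    (hJd : ∀ t ∈ Set.Ico (0:ℝ) T, ∀ l : ℝ, DifferentiableAt ℝ (fun s => J s l) t)
    (hxC2 : ContDiff ℝ 2 fun p : ℝ × ℝ => x p.1 p.2)
    (hyC2 : ContDiff ℝ 2 fun p : ℝ × ℝ => y p.1 p.2)
    (heqP : ∀ t ∈ Set.Ico (0:ℝ) T, ∀ l : ℝ,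
      deriv (fun s => P s l) t +
        (ρ - ρt) * (deriv (fun m => y t m) l * (I t l / P t l) -
          deriv (fun m => x t m) l * (J t l / P t l)) -
        ρ * (deriv (fun m => y t m) l * u - deriv (fun m => x t m) l * v) = 0)
    (heqI : ∀ t ∈ Set.Ico (0:ℝ) T, ∀ l : ℝ,
      deriv (fun s => I s l) t +
        ρ * u * (deriv (fun m => y t m) l * (I t l / P t l) -
          deriv (fun m => x t m) l * (J t l / P t l)) -
        ρ * u * (deriv (fun m => y t m) l * u - deriv (fun m => x t m) l * v) = 0)
    (heqJ : ∀ t ∈ Set.Ico (0:ℝ) T, ∀ l : ℝ,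
      deriv (fun s => J s l) t +
        ρ * v * (deriv (fun m => y t m) l * (I t l / P t l) -
          deriv (fun m => x t m) l * (J t l / P t l)) -
        ρ * v * (deriv (fun m => y t m) l * u - deriv (fun m => x t m) l * v) = 0)
    (hxt : ∀ t ∈ Set.Ico (0:ℝ) T, ∀ l : ℝ,
      deriv (fun s => x s l) t = I t l / P t l)
    (hyt : ∀ t ∈ Set.Ico (0:ℝ) T, ∀ l : ℝ,
      deriv (fun s => y s l) t = J t l / P t l)
    (hC0 : ∀ l : ℝ, u * J 0 l - v * I 0 l = 0)
    (huv : (u, v) ≠ ((0 : ℝ), (0 : ℝ)))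
    (k : ℝ → ℝ → ℝ)
    (hk : ∀ t l : ℝ, I t l = k t l * u ∧ J t l = k t l * v) :
    (∀ t ∈ Set.Ico (0:ℝ) T, ∀ l : ℝ,
      HasDerivAt (fun s => u * deriv (fun m => y s m) l -
        v * deriv (fun m => x s m) l) 0 t ∧
      u * deriv (fun m => y t m) l - v * deriv (fun m => x t m) l =
        u * deriv (fun m => y 0 m) l - v * deriv (fun m => x 0 m) l) ∧
    (∀ t ∈ Set.Ico (0:ℝ) T, ∀ l : ℝ,
      deriv (fun s => P s l) t +
        (u * deriv (fun m => y 0 m) l - v * deriv (fun m => x 0 m) l) *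
          ((k t l / P t l) * (ρ - ρt) - ρ) = 0 ∧
      deriv (fun s => P s l * (k s l / P s l)) t +
        ρ * (u * deriv (fun m => y 0 m) l - v * deriv (fun m => x 0 m) l) *
          (k t l / P t l - 1) = 0) := by
  have hxl : ∀ t l, DifferentiableAt ℝ (fun m => x t m) l := fun t l =>
    ((hxC2.differentiable (by norm_num)).comp
      ((differentiable_const t).prodMk differentiable_id)) l
  have hyl : ∀ t l, DifferentiableAt ℝ (fun m => y t m) l := fun t l =>
    ((hyC2.differentiable (by norm_num)).comp
      ((differentiable_const t).prodMk differentiable_id)) l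
  have hxs : ∀ t l, DifferentiableAt ℝ (fun s => x s l) t := fun t l =>
    ((hxC2.differentiable (by norm_num)).comp
      (differentiable_id.prodMk (differentiable_const l))) t
  have hys : ∀ t l, DifferentiableAt ℝ (fun s => y s l) t := fun t l =>
    ((hyC2.differentiable (by norm_num)).comp
      (differentiable_id.prodMk (differentiable_const l))) t
  have hG : ∀ t ∈ Set.Ico (0:ℝ) T, ∀ l : ℝ,
      HasDerivAt (fun s => u * deriv (fun m => y s m) l -
        v * deriv (fun m => x s m) l) 0 t := by
    intro t ht l
    have := mixed_aux (fun p => u * y p.1 p.2 - v * x p.1 p.2)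
      ((contDiff_const.mul hyC2).sub (contDiff_const.mul hxC2)) t l (by
        intro m
        have := (((hys t m).hasDerivAt.const_mul u).sub
          ((hxs t m).hasDerivAt.const_mul v)).deriv
        refine Eq.trans this ?_
        rw [hxt t ht, hyt t ht, (hk t m).1, (hk t m).2]
        ring)
    convert this using 1
    funext s
    exact (((hyl s l).hasDerivAt.const_mul u).sub
      ((hxl s l).hasDerivAt.const_mul v)).deriv.symm
  have hconst : ∀ t ∈ Set.Ico (0:ℝ) T, ∀ l : ℝ,
      u * deriv (fun m => y t m) l - v * deriv (fun m => x t m) l =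
        u * deriv (fun m => y 0 m) l - v * deriv (fun m => x 0 m) l := by
    intro t ht l
    have hsub : ∀ s ∈ Set.Icc 0 t, s ∈ Set.Ico (0:ℝ) T := fun s hs =>
      ⟨hs.1, hs.2.trans_lt ht.2⟩
    exact constant_of_has_deriv_right_zero
      (f := fun s => u * deriv (fun m => y s m) l - v * deriv (fun m => x s m) l)
      (fun s hs => (hG s (hsub s hs) l).continuousAt.continuousWithinAt)
      (fun s hs => (hG s (hsub s (Set.Ico_subset_Icc_self hs)) l).hasDerivWithinAt)
      t ⟨ht.1, le_rfl⟩
  refine ⟨fun t ht l => ⟨hG t ht l, hconst t ht l⟩, fun t ht l => ?_⟩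
  have hP0 := (hPpos t ht l).ne'
  rw [← hconst t ht l]
  constructor
  · have := heqP t ht l
    rw [(hk t l).1, (hk t l).2] at this
    rw [← this]
    ring
  · have hev : (fun s => P s l * (k s l / P s l)) =ᶠ[nhds t] fun s => k s l := by
      filter_upwards [(hPd t ht l).continuousAt.eventually_ne hP0] with s hs
      exact mul_div_cancel₀ _ hs
    rw [hev.deriv_eq]
    have hI := heqI t ht l
    have hJ := heqJ t ht l
    have fI : (fun s => I s l) = fun s => k s l * u := funext fun s => (hk s l).1
    have fJ : (fun s => J s l) = fun s => k s l * v := funext fun s => (hk s l).2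
    rw [fI, deriv_mul_const_field, (hk t l).1, (hk t l).2] at hI
    rw [fJ, deriv_mul_const_field, (hk t l).1, (hk t l).2] at hJ
    by_cases hu : u = 0
    · have hv : v ≠ 0 := fun hv => huv (by rw [hu, hv])
      apply mul_left_cancel₀ hv
      rw [mul_zero, ← hJ]
      ring
    · apply mul_left_cancel₀ hu
      rw [mul_zero, ← hI]
      ring
end

section
/- Let ρ>0, ρ̃>0 with ρ≠ρ̃, G>0, P₀>0 and k̂₀∈ℝ be real numbers, and set N := k̂₀(ρ−ρ̃) − ρ; assume N<0 (which holds in particular when 0<k̂₀<1). Then: (i) Q(t) := P₀² − 2G·P₀·N·t + ρρ̃G²t² > 0 for all t≥0; (ii) defining P(t) := √(Q(t)) and k̂(t) := (ρ − P′(t)/G)/(ρ−ρ̃) for t≥0, one has P(0)=P₀, k̂(0)=k̂₀, P′(t) = −G·(k̂(t)(ρ−ρ̃) − ρ), and (P·k̂)′(t) = −ρ·G·(k̂(t) − 1) for all t≥0. -/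
/-- `Q(t) = P₀² − 2GP₀Nt + ρρ̃G²t²`, the square of the shock mass (formula (34)). -/
noncomputable def Qf (ρ ρt G P₀ N t : ℝ) : ℝ :=
  P₀ ^ 2 - 2 * G * P₀ * N * t + ρ * ρt * G ^ 2 * t ^ 2

/-- `P(t) = √Q(t)`, the shock mass (formula (34)). -/
noncomputable def Pf (ρ ρt G P₀ N : ℝ) : ℝ → ℝ :=
  fun t => Real.sqrt (Qf ρ ρt G P₀ N t)

/-- `k̂(t) = (ρ − P′(t)/G)/(ρ − ρ̃)`, the normalized momentum coefficient. -/
noncomputable def khatf (ρ ρt G P₀ N : ℝ) : ℝ → ℝ :=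
  fun t => (ρ - deriv (Pf ρ ρt G P₀ N) t / G) / (ρ - ρt)

theorem hasDeriv_Pf (ρ ρt G P₀ N t : ℝ) (h : 0 < Qf ρ ρt G P₀ N t) :
    HasDerivAt (Pf ρ ρt G P₀ N)
      ((-(G * P₀ * N) + ρ * ρt * G ^ 2 * t) / Pf ρ ρt G P₀ N t) t := by
  have hQ : HasDerivAt (Qf ρ ρt G P₀ N)
      (2 * (-(G * P₀ * N) + ρ * ρt * G ^ 2 * t)) t := by
    have h1 := (((hasDerivAt_id t).const_mul (2 * G * P₀ * N)).const_sub (P₀ ^ 2)).add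
      (((hasDerivAt_id t).pow 2).const_mul (ρ * ρt * G ^ 2))
    refine h1.congr_deriv ?_
    simp
    ring
  refine (hQ.sqrt h.ne').congr_deriv ?_
  have : Real.sqrt (Qf ρ ρt G P₀ N t) ≠ 0 := (Real.sqrt_pos.2 h).ne'
  simp only [Pf]
  field_simp

/-- Explicit solution (formula (34)) of the ODE system (33). -/
theorem stmt_9 (ρ ρt G P₀ khat₀ N : ℝ)
    (hρ : 0 < ρ) (hρt : 0 < ρt) (hne : ρ ≠ ρt) (hG : 0 < G) (hP₀ : 0 < P₀)
    (hN : N = khat₀ * (ρ - ρt) - ρ) (hNneg : N < 0) :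
    (∀ t : ℝ, 0 ≤ t → 0 < Qf ρ ρt G P₀ N t) ∧
    Pf ρ ρt G P₀ N 0 = P₀ ∧
    khatf ρ ρt G P₀ N 0 = khat₀ ∧
    (∀ t : ℝ, 0 ≤ t → deriv (Pf ρ ρt G P₀ N) t =
      -(G * (khatf ρ ρt G P₀ N t * (ρ - ρt) - ρ))) ∧
    (∀ t : ℝ, 0 ≤ t →
      deriv (fun s => Pf ρ ρt G P₀ N s * khatf ρ ρt G P₀ N s) t =
        -(ρ * G * (khatf ρ ρt G P₀ N t - 1))) := by
  have hd : ρ - ρt ≠ 0 := sub_ne_zero.2 hne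
  have hG' : G ≠ 0 := hG.ne'
  have hQ : ∀ t : ℝ, 0 ≤ t → 0 < Qf ρ ρt G P₀ N t := by
    intro t ht
    have h1 : 0 ≤ G * P₀ * (-N) * t := by
      have : 0 < -N := by linarith
      positivity
    have h2 : 0 ≤ ρ * ρt * G ^ 2 * t ^ 2 := by positivity
    have h3 : 0 < P₀ ^ 2 := by positivity
    unfold Qf
    nlinarith
  have hP0 : Pf ρ ρt G P₀ N 0 = P₀ := by
    simp [Pf, Qf, Real.sqrt_sq hP₀.le]
  refine ⟨hQ, hP0, ?_, ?_, ?_⟩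
  · simp only [khatf]
    rw [(hasDeriv_Pf ρ ρt G P₀ N 0 (hQ 0 le_rfl)).deriv, hP0, hN]
    field_simp
    ring
  · intro t _
    simp only [khatf]
    field_simp
    ring
  · intro t ht
    have hc : Continuous (Qf ρ ρt G P₀ N) := by
      unfold Qf
      fun_prop
    have hev : ∀ᶠ s in nhds t, 0 < Qf ρ ρt G P₀ N s :=
      hc.continuousAt.eventually (lt_mem_nhds (hQ t ht))
    have heq : (fun s => Pf ρ ρt G P₀ N s * khatf ρ ρt G P₀ N s) =ᶠ[nhds t]
        fun s => (ρ * Pf ρ ρt G P₀ N s - (-(P₀ * N) + ρ * ρt * G * s)) / (ρ - ρt) := by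
      filter_upwards [hev] with s hs
      have hp : Pf ρ ρt G P₀ N s ≠ 0 := (Real.sqrt_pos.2 hs).ne'
      simp only [khatf]
      rw [(hasDeriv_Pf ρ ρt G P₀ N s hs).deriv]
      field_simp
    have hD := hasDeriv_Pf ρ ρt G P₀ N t (hQ t ht)
    have hD' := hD.differentiableAt.hasDerivAt
    have h2 := ((hD'.const_mul ρ).sub
      (((hasDerivAt_id t).const_mul (ρ * ρt * G)).const_add (-(P₀ * N)))).div_const (ρ - ρt)
    rw [heq.deriv_eq]
    refine h2.deriv.trans ?_
    simp only [khatf]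
    field_simp
    ring
end

section
/- Let ρ>0, ρ̃>0 with ρ≠ρ̃, G>0, P₀>0 and 0<k̂₀<1 be real numbers; set N := k̂₀(ρ−ρ̃) − ρ, P(t) := √(P₀² − 2G·P₀·N·t + ρρ̃G²t²) and k̂(t) := (ρ − P′(t)/G)/(ρ−ρ̃). Then 0 < k̂(t) < 1 for every t≥0, and consequently 0 < ∫₀ᵗ k̂(τ)dτ < t for every t>0. -/
theorem aux_bound (a b M P s : ℝ) (ha : 0 < a) (hab : a < b) (haM : a < M) (hMb : M < b)
    (hP : 0 < P) (hs : 0 ≤ s) :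
    a < (P * M + a * b * s) / Real.sqrt (P ^ 2 + 2 * P * M * s + a * b * s ^ 2) ∧
    (P * M + a * b * s) / Real.sqrt (P ^ 2 + 2 * P * M * s + a * b * s ^ 2) < b := by
  have hM : 0 < M := ha.trans haM
  have hb : 0 < b := ha.trans hab
  have hba : 0 < b - a := sub_pos.2 hab
  have hQ : 0 < P ^ 2 + 2 * P * M * s + a * b * s ^ 2 := by positivity
  have hS := Real.sqrt_pos.2 hQ
  have hsq := Real.sq_sqrt hQ.le
  have h1 : 0 ≤ 2 * P * M * s * (b - a) + a * b * s ^ 2 * (b - a) := by positivity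
  have hn : 0 < P * M + a * b * s := by positivity
  rw [lt_div_iff₀ hS, div_lt_iff₀ hS]
  constructor
  · apply lt_of_pow_lt_pow_left₀ 2 hn.le
    rw [mul_pow, hsq]
    have h2 : 0 < P ^ 2 * ((M - a) * (M + a)) :=
      mul_pos (by positivity) (mul_pos (by linarith) (by linarith))
    have h3 := mul_nonneg ha.le h1
    nlinarith
  · apply lt_of_pow_lt_pow_left₀ 2 (by positivity)
    rw [mul_pow, hsq]
    have h2 : 0 < P ^ 2 * ((b - M) * (M + b)) :=
      mul_pos (by positivity) (mul_pos (by linarith) (by linarith))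
    have h3 := mul_nonneg hb.le h1
    nlinarith

theorem aux_khat (ρ ρt G P₀ N t : ℝ) (hG : 0 < G) (hQ : 0 < Qf ρ ρt G P₀ N t) :
    khatf ρ ρt G P₀ N t =
      (ρ - (P₀ * (-N) + ρ * ρt * (G * t)) / Real.sqrt (Qf ρ ρt G P₀ N t)) / (ρ - ρt) := by
  have h : HasDerivAt (Qf ρ ρt G P₀ N) (- (2 * G * P₀ * N) + ρ * ρt * G ^ 2 * (2 * t)) t := by
    have h1 := ((hasDerivAt_id t).const_mul (2 * G * P₀ * N)).const_sub (P₀ ^ 2)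
    have h2 := ((hasDerivAt_id t).pow 2).const_mul (ρ * ρt * G ^ 2)
    refine (h1.add h2).congr_deriv ?_
    simp
  have hd : deriv (Pf ρ ρt G P₀ N) t = _ := (h.sqrt hQ.ne').deriv
  have hS := Real.sqrt_pos.2 hQ
  unfold khatf
  rw [hd]
  congr 2
  field_simp

/-- Stability of the shock front (conditions (35)–(36)): `0 < k̂₀ < 1` propagates. -/
theorem stmt_10 (ρ ρt G P₀ khat₀ N : ℝ)
    (hρ : 0 < ρ) (hρt : 0 < ρt) (hne : ρ ≠ ρt) (hG : 0 < G) (hP₀ : 0 < P₀)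
    (hk₀ : 0 < khat₀) (hk₁ : khat₀ < 1)
    (hN : N = khat₀ * (ρ - ρt) - ρ) :
    (∀ t : ℝ, 0 ≤ t → 0 < khatf ρ ρt G P₀ N t ∧ khatf ρ ρt G P₀ N t < 1) ∧
    (∀ t : ℝ, 0 < t →
      0 < (∫ τ in (0:ℝ)..t, khatf ρ ρt G P₀ N τ) ∧
      (∫ τ in (0:ℝ)..t, khatf ρ ρt G P₀ N τ) < t) := by
  have hM : 0 < -N := by rw [hN]; nlinarith [mul_pos hk₀ hρt, mul_pos (sub_pos.2 hk₁) hρ]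
  have hQ : ∀ t : ℝ, 0 ≤ t → 0 < Qf ρ ρt G P₀ N t := by
    intro t ht
    have h1 : 0 ≤ 2 * G * P₀ * (-N) * t := by positivity
    have h2 : 0 < P₀ ^ 2 + ρ * ρt * G ^ 2 * t ^ 2 := by positivity
    unfold Qf
    linarith
  have key : ∀ t : ℝ, 0 ≤ t → 0 < khatf ρ ρt G P₀ N t ∧ khatf ρ ρt G P₀ N t < 1 := by
    intro t ht
    rw [aux_khat ρ ρt G P₀ N t hG (hQ t ht)]
    have hs : 0 ≤ G * t := by positivity
    rcases lt_or_gt_of_ne hne with h | h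
    · have hd : 0 < ρt - ρ := sub_pos.2 h
      have e : Qf ρ ρt G P₀ N t
          = P₀ ^ 2 + 2 * P₀ * (-N) * (G * t) + ρ * ρt * (G * t) ^ 2 := by unfold Qf; ring
      obtain ⟨h1, h2⟩ := aux_bound ρ ρt (-N) P₀ (G * t) hρ h
        (by rw [hN]; nlinarith [mul_pos hk₀ hd]) (by rw [hN]; nlinarith [mul_pos (sub_pos.2 hk₁) hd])
        hP₀ hs
      rw [← e] at h1 h2
      have hd' : ρ - ρt < 0 := by linarith
      exact ⟨div_pos_of_neg_of_neg (by linarith) hd', (div_lt_one_of_neg hd').2 (by linarith)⟩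
    · have hd : 0 < ρ - ρt := sub_pos.2 h
      have e : Qf ρ ρt G P₀ N t
          = P₀ ^ 2 + 2 * P₀ * (-N) * (G * t) + ρt * ρ * (G * t) ^ 2 := by unfold Qf; ring
      obtain ⟨h1, h2⟩ := aux_bound ρt ρ (-N) P₀ (G * t) hρt h
        (by rw [hN]; nlinarith [mul_pos (sub_pos.2 hk₁) hd]) (by rw [hN]; nlinarith [mul_pos hk₀ hd])
        hP₀ hs
      rw [← e, mul_comm ρt ρ] at h1 h2
      exact ⟨div_pos (by linarith) hd, (div_lt_one hd).2 (by linarith)⟩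
  refine ⟨key, fun t ht => ?_⟩
  have hc : ContinuousOn (khatf ρ ρt G P₀ N) (Set.uIcc 0 t) := by
    rw [Set.uIcc_of_le ht.le]
    have hcQ : Continuous (Qf ρ ρt G P₀ N) := by unfold Qf; fun_prop
    refine ContinuousOn.congr (f := fun t =>
      (ρ - (P₀ * (-N) + ρ * ρt * (G * t)) / Real.sqrt (Qf ρ ρt G P₀ N t)) / (ρ - ρt)) ?_
      (fun x hx => aux_khat ρ ρt G P₀ N x hG (hQ x hx.1))
    refine ContinuousOn.div_const (ContinuousOn.sub continuousOn_const
      (ContinuousOn.div (by fun_prop) (hcQ.sqrt.continuousOn) ?_)) _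
    intro x hx
    exact (Real.sqrt_pos.2 (hQ x hx.1)).ne'
  have hi := hc.intervalIntegrable (μ := MeasureTheory.volume)
  refine ⟨intervalIntegral.intervalIntegral_pos_of_pos_on hi (fun x hx => (key x hx.1.le).1) ht, ?_⟩
  have h1 : IntervalIntegrable (fun _ : ℝ => (1:ℝ)) MeasureTheory.volume 0 t :=
    intervalIntegrable_const
  have h2 := intervalIntegral.intervalIntegral_pos_of_pos_on (h1.sub hi)
    (fun x hx => sub_pos.2 (key x hx.1.le).2) ht
  have h3 := intervalIntegral.integral_sub h1 hi
  have h4 : (∫ _ in (0:ℝ)..t, (1:ℝ)) = t := by simp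
  have h5 : 0 < ∫ x in (0:ℝ)..t, ((1:ℝ) - khatf ρ ρt G P₀ N x) := h2
  linarith
end

section
/- Let ρ>0, ρ̃>0 with ρ≠ρ̃, G>0, P₀>0 and k̂₀∈ℝ with N := k̂₀(ρ−ρ̃) − ρ < 0; set P(t) := √(P₀² − 2G·P₀·N·t + ρρ̃G²t²) and k̂(t) := (ρ − P′(t)/G)/(ρ−ρ̃). Then k̂(t) → √ρ/(√ρ + √ρ̃) as t → +∞. -/
/-- Asymptotics in Theorem 5.1: `k̂(t) → √ρ/(√ρ + √ρ̃)` as `t → +∞` (formula (37)). -/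
theorem stmt_11 (ρ ρt G P₀ khat₀ N : ℝ)
    (hρ : 0 < ρ) (hρt : 0 < ρt) (hne : ρ ≠ ρt) (hG : 0 < G) (hP₀ : 0 < P₀)
    (hN : N = khat₀ * (ρ - ρt) - ρ) (hNneg : N < 0) :
    Filter.Tendsto (khatf ρ ρt G P₀ N) Filter.atTop
      (nhds (Real.sqrt ρ / (Real.sqrt ρ + Real.sqrt ρt))) := by
  have hq : 0 < ρ * ρt * G ^ 2 := by positivity
  set F : ℝ → ℝ := fun s => (ρ - ((-(G * P₀ * N) * s + ρ * ρt * G ^ 2) /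
    Real.sqrt (P₀ ^ 2 * s ^ 2 - 2 * G * P₀ * N * s + ρ * ρt * G ^ 2)) / G) / (ρ - ρt) with hF
  have hd : ρ - ρt ≠ 0 := sub_ne_zero.mpr hne
  have hcont : ContinuousAt F 0 := by
    have h0 : Real.sqrt (P₀ ^ 2 * (0:ℝ) ^ 2 - 2 * G * P₀ * N * 0 + ρ * ρt * G ^ 2) ≠ 0 := by
      have : 0 < P₀ ^ 2 * (0:ℝ) ^ 2 - 2 * G * P₀ * N * 0 + ρ * ρt * G ^ 2 := by
        simpa using hq
      exact (Real.sqrt_pos.mpr this).ne'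
    have hnum : ContinuousAt (fun s : ℝ => -(G * P₀ * N) * s + ρ * ρt * G ^ 2) 0 := by
      fun_prop
    have hden : ContinuousAt (fun s : ℝ =>
        Real.sqrt (P₀ ^ 2 * s ^ 2 - 2 * G * P₀ * N * s + ρ * ρt * G ^ 2)) 0 := by
      fun_prop
    exact (continuousAt_const.sub ((hnum.div hden h0).div_const G)).div_const (ρ - ρt)
  have hF0 : F 0 = Real.sqrt ρ / (Real.sqrt ρ + Real.sqrt ρt) := by
    have ha := Real.sqrt_pos.mpr hρ
    have hb := Real.sqrt_pos.mpr hρt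
    have ha2 := Real.sq_sqrt hρ.le
    have hb2 := Real.sq_sqrt hρt.le
    generalize Real.sqrt ρ = a at *
    generalize Real.sqrt ρt = b at *
    subst ha2
    subst hb2
    have hs : Real.sqrt (P₀ ^ 2 * (0:ℝ) ^ 2 - 2 * G * P₀ * N * 0 + a ^ 2 * b ^ 2 * G ^ 2)
        = a * b * G := by
      rw [show P₀ ^ 2 * (0:ℝ) ^ 2 - 2 * G * P₀ * N * 0 + a ^ 2 * b ^ 2 * G ^ 2
        = (a * b * G) ^ 2 by ring]
      exact Real.sqrt_sq (by positivity)
    simp only [hF]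
    rw [hs]
    have hab : a + b ≠ 0 := by positivity
    rw [div_eq_div_iff hd hab]
    field_simp
    ring
  have hlim : Filter.Tendsto (fun t : ℝ => F t⁻¹) Filter.atTop (nhds (F 0)) :=
    hcont.tendsto.comp tendsto_inv_atTop_zero
  rw [← hF0]
  refine hlim.congr' ?_
  filter_upwards [Filter.eventually_gt_atTop (0:ℝ)] with t ht
  have hQ : 0 < Qf ρ ρt G P₀ N t := by
    have h1 : 0 < G * P₀ * (-N) * t := by
      have : 0 < -N := by linarith
      positivity
    have h2 : 0 < ρ * ρt * G ^ 2 * t ^ 2 := by positivity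
    unfold Qf
    nlinarith [sq_nonneg P₀]
  have hQd : HasDerivAt (Qf ρ ρt G P₀ N)
      (-(2 * G * P₀ * N) + ρ * ρt * G ^ 2 * (2 * t)) t := by
    have h := (((hasDerivAt_id t).const_mul (2 * G * P₀ * N)).const_sub (P₀ ^ 2)).add
      (((hasDerivAt_id t).pow 2).const_mul (ρ * ρt * G ^ 2))
    have h' : HasDerivAt (Qf ρ ρt G P₀ N) _ t := h
    exact h'.congr_deriv (by simp)
  have hPd : deriv (Pf ρ ρt G P₀ N) t = _ := (hQd.sqrt hQ.ne').deriv
  have hsq : Real.sqrt (P₀ ^ 2 * t⁻¹ ^ 2 - 2 * G * P₀ * N * t⁻¹ + ρ * ρt * G ^ 2)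
      = Real.sqrt (Qf ρ ρt G P₀ N t) / t := by
    rw [show P₀ ^ 2 * t⁻¹ ^ 2 - 2 * G * P₀ * N * t⁻¹ + ρ * ρt * G ^ 2
      = Qf ρ ρt G P₀ N t / t ^ 2 by unfold Qf; field_simp]
    rw [Real.sqrt_div hQ.le, Real.sqrt_sq ht.le]
  have hS : Real.sqrt (Qf ρ ρt G P₀ N t) ≠ 0 := (Real.sqrt_pos.mpr hQ).ne'
  simp only [hF, khatf]
  rw [hPd, hsq]
  congr 3
  field_simp
end

section
/- Let ρ>0, ρ̃>0 with ρ≠ρ̃, G>0, P₀>0 and k̂₀∈ℝ with N := k̂₀(ρ−ρ̃) − ρ < 0; set P(t) := √(P₀² − 2G·P₀·N·t + ρρ̃G²t²), k̂(t) := (ρ − P′(t)/G)/(ρ−ρ̃) and ϰ := √ρ/(√ρ + √ρ̃). Then for every x₀, u ∈ ℝ, the function x(t) := x₀ + u·∫₀ᵗ k̂(τ)dτ satisfies (x(t) − x₀ − ϰ·u·t)/t → 0 as t → +∞; equivalently, (1/t)∫₀ᵗ k̂(τ)dτ → ϰ. -/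
lemma Qf_pos_aux (ρ ρt G P₀ N t : ℝ) (hρ : 0 < ρ) (hρt : 0 < ρt) (hG : 0 < G) (hP₀ : 0 < P₀)
    (hNneg : N < 0) (ht : 0 ≤ t) : 0 < Qf ρ ρt G P₀ N t := by
  unfold Qf
  have h1 : 0 ≤ G * P₀ * (-N) * t := by
    have : 0 < -N := by linarith
    positivity
  have h2 : 0 ≤ ρ * ρt * G ^ 2 * t ^ 2 := by positivity
  have h3 : 0 < P₀ ^ 2 := by positivity
  nlinarith

lemma Pf_deriv_aux (ρ ρt G P₀ N t : ℝ) (h : 0 < Qf ρ ρt G P₀ N t) :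
    HasDerivAt (Pf ρ ρt G P₀ N)
      ((- (2 * G * P₀ * N) + ρ * ρt * G ^ 2 * (2 * t)) / (2 * Real.sqrt (Qf ρ ρt G P₀ N t))) t := by
  have hQ : HasDerivAt (Qf ρ ρt G P₀ N) (- (2 * G * P₀ * N) + ρ * ρt * G ^ 2 * (2 * t)) t := by
    have h1 := (((hasDerivAt_id t).const_mul (2 * G * P₀ * N)).const_sub (P₀ ^ 2)).add
      (((hasDerivAt_id t).pow 2).const_mul (ρ * ρt * G ^ 2))
    refine HasDerivAt.congr_deriv h1 ?_
    simp
  exact hQ.sqrt h.ne'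

lemma khat_int_aux (ρ ρt G P₀ N t : ℝ) (hρ : 0 < ρ) (hρt : 0 < ρt) (hG : 0 < G) (hP₀ : 0 < P₀)
    (hNneg : N < 0) (ht : 0 ≤ t) :
    ∫ τ in (0:ℝ)..t, khatf ρ ρt G P₀ N τ
      = (ρ * t - (Pf ρ ρt G P₀ N t - P₀) / G) / (ρ - ρt) := by
  have hpos : ∀ s ∈ Set.uIcc 0 t, 0 < Qf ρ ρt G P₀ N s := by
    intro s hs
    rw [Set.uIcc_of_le ht] at hs
    exact Qf_pos_aux ρ ρt G P₀ N s hρ hρt hG hP₀ hNneg hs.1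
  have hQc : Continuous (Qf ρ ρt G P₀ N) := by
    unfold Qf
    fun_prop
  have hd : ∀ s ∈ Set.uIcc 0 t, HasDerivAt
      (fun s => (ρ * s - Pf ρ ρt G P₀ N s / G) / (ρ - ρt)) (khatf ρ ρt G P₀ N s) s := by
    intro s hs
    have h := (Pf_deriv_aux ρ ρt G P₀ N s (hpos s hs)).differentiableAt.hasDerivAt
    have h1 := ((((hasDerivAt_id s).const_mul ρ).sub (h.div_const G)).div_const (ρ - ρt))
    refine HasDerivAt.congr_deriv h1 ?_
    simp [khatf]
  have hc : ContinuousOn (khatf ρ ρt G P₀ N) (Set.uIcc 0 t) := by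
    have : ContinuousOn (fun s => (ρ - ((- (2 * G * P₀ * N) + ρ * ρt * G ^ 2 * (2 * s)) /
        (2 * Real.sqrt (Qf ρ ρt G P₀ N s))) / G) / (ρ - ρt)) (Set.uIcc 0 t) := by
      refine ContinuousOn.div_const (continuousOn_const.sub (ContinuousOn.div_const
        (ContinuousOn.div (by fun_prop) (by fun_prop) ?_) G)) _
      intro s hs
      have := Real.sqrt_pos.2 (hpos s hs)
      positivity
    refine this.congr ?_
    intro s hs
    simp only [khatf, (Pf_deriv_aux ρ ρt G P₀ N s (hpos s hs)).deriv]
  rw [intervalIntegral.integral_eq_sub_of_hasDerivAt hd hc.intervalIntegrable]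
  have h0 : Pf ρ ρt G P₀ N 0 = P₀ := by
    simp [Pf, Qf, Real.sqrt_sq hP₀.le]
  rw [h0]
  ring

lemma Pf_lim_aux (ρ ρt G P₀ N : ℝ) (hG : 0 < G) (hρ : 0 < ρ) :
    Filter.Tendsto (fun t => Pf ρ ρt G P₀ N t / t) Filter.atTop
      (nhds (Real.sqrt ρ * Real.sqrt ρt * G)) := by
  have hi : Filter.Tendsto (fun t : ℝ => t⁻¹) Filter.atTop (nhds 0) := tendsto_inv_atTop_zero
  have h1 : Filter.Tendsto (fun t : ℝ => Real.sqrt (P₀ ^ 2 * t⁻¹ ^ 2 - 2 * G * P₀ * N * t⁻¹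
      + ρ * ρt * G ^ 2)) Filter.atTop
      (nhds (Real.sqrt (P₀ ^ 2 * 0 ^ 2 - 2 * G * P₀ * N * 0 + ρ * ρt * G ^ 2))) :=
    ((((hi.pow 2).const_mul _).sub (hi.const_mul _)).add_const _).sqrt
  have h2 : Real.sqrt (P₀ ^ 2 * 0 ^ 2 - 2 * G * P₀ * N * 0 + ρ * ρt * G ^ 2)
      = Real.sqrt ρ * Real.sqrt ρt * G := by
    have : P₀ ^ 2 * 0 ^ 2 - 2 * G * P₀ * N * 0 + ρ * ρt * G ^ 2 = (ρ * ρt) * G ^ 2 := by ring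
    rw [this, Real.sqrt_mul' _ (sq_nonneg G), Real.sqrt_sq hG.le, Real.sqrt_mul hρ.le]
  rw [h2] at h1
  refine h1.congr' ?_
  filter_upwards [Filter.eventually_gt_atTop 0] with t ht
  have : P₀ ^ 2 * t⁻¹ ^ 2 - 2 * G * P₀ * N * t⁻¹ + ρ * ρt * G ^ 2
      = Qf ρ ρt G P₀ N t / t ^ 2 := by
    unfold Qf
    field_simp
  rw [this, Real.sqrt_div' _ (sq_nonneg t), Real.sqrt_sq ht.le]
  rfl

/-- Conclusion of Theorem 5.1: the shock front `x(t) = x₀ + u∫₀ᵗ k̂` is asymptotic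
to the straight-line front `x₀ + ϰut` with `ϰ = √ρ/(√ρ+√ρ̃)`. -/
theorem stmt_12 (ρ ρt G P₀ khat₀ N : ℝ)
    (hρ : 0 < ρ) (hρt : 0 < ρt) (hne : ρ ≠ ρt) (hG : 0 < G) (hP₀ : 0 < P₀)
    (hN : N = khat₀ * (ρ - ρt) - ρ) (hNneg : N < 0) :
    ∀ x₀ u : ℝ,
      Filter.Tendsto
        (fun t => ((x₀ + u * ∫ τ in (0:ℝ)..t, khatf ρ ρt G P₀ N τ) - x₀ -
          (Real.sqrt ρ / (Real.sqrt ρ + Real.sqrt ρt)) * u * t) / t)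
        Filter.atTop (nhds 0) ∧
      Filter.Tendsto
        (fun t => (∫ τ in (0:ℝ)..t, khatf ρ ρt G P₀ N τ) / t)
        Filter.atTop (nhds (Real.sqrt ρ / (Real.sqrt ρ + Real.sqrt ρt))) := by
  have hlim : Filter.Tendsto
        (fun t => (∫ τ in (0:ℝ)..t, khatf ρ ρt G P₀ N τ) / t)
        Filter.atTop (nhds (Real.sqrt ρ / (Real.sqrt ρ + Real.sqrt ρt))) := by
    have hi : Filter.Tendsto (fun t : ℝ => t⁻¹) Filter.atTop (nhds 0) := tendsto_inv_atTop_zero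
    have h1 := ((((Pf_lim_aux ρ ρt G P₀ N hG hρ).sub (hi.const_mul P₀)).div_const G).const_sub
      ρ).div_const (ρ - ρt)
    have hd : ρ - ρt ≠ 0 := sub_ne_zero.2 hne
    have h2 : (ρ - (Real.sqrt ρ * Real.sqrt ρt * G - P₀ * 0) / G) / (ρ - ρt)
        = Real.sqrt ρ / (Real.sqrt ρ + Real.sqrt ρt) := by
      have ha := Real.sqrt_pos.2 hρ
      have hb := Real.sqrt_pos.2 hρt
      have ha2 := Real.sq_sqrt hρ.le
      have hb2 := Real.sq_sqrt hρt.le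
      have h3 : (Real.sqrt ρ * Real.sqrt ρt * G - P₀ * 0) / G = Real.sqrt ρ * Real.sqrt ρt := by
        field_simp
        ring
      rw [h3, div_eq_div_iff hd (by positivity)]
      linear_combination (-Real.sqrt ρt) * ha2 - Real.sqrt ρ * hb2
    rw [h2] at h1
    refine h1.congr' ?_
    filter_upwards [Filter.eventually_gt_atTop 0] with t ht
    rw [khat_int_aux ρ ρt G P₀ N t hρ hρt hG hP₀ hNneg ht.le]
    field_simp
  intro x₀ u
  refine ⟨?_, hlim⟩
  have h := (hlim.sub_const (Real.sqrt ρ / (Real.sqrt ρ + Real.sqrt ρt))).const_mul u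
  rw [sub_self, mul_zero] at h
  refine h.congr' ?_
  filter_upwards [Filter.eventually_gt_atTop 0] with t ht
  generalize (∫ τ in (0:ℝ)..t, khatf ρ ρt G P₀ N τ) = I
  generalize Real.sqrt ρ / (Real.sqrt ρ + Real.sqrt ρt) = k
  field_simp
  ring
end

section
/- Let u,v,ρ∈ℝ and T>0. Let P,I,J,x,y:(0,T)×ℝ→ℝ with P>0, P twice differentiable in t and such that all the derivatives below exist and mixed partials of x,y commute. Suppose: ∂_tP = ρ·(u·∂_ly − v·∂_lx); ∂_tx = I/P and ∂_ty = J/P; and u·J(t,l) − v·I(t,l) = C(l) for a differentiable function C independent of t. Then ∂_t²P(t,l) = ρ·∂_l[C(l)/P(t,l)] for all (t,l). -/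
/-- Equation (39) of the paper: with equal constant densities on both sides,
the intra-shock mass satisfies `P̈ = ρ (C(l)/P)_l`. -/
theorem stmt_13 (u v ρ T : ℝ) (hT : 0 < T)
    (P I J x y : ℝ → ℝ → ℝ) (C : ℝ → ℝ)
    (hPpos : ∀ t ∈ Set.Ioo (0:ℝ) T, ∀ l : ℝ, 0 < P t l)
    (hPd : ∀ t ∈ Set.Ioo (0:ℝ) T, ∀ l : ℝ,
      DifferentiableAt ℝ (fun s => P s l) t)
    (hPd2 : ∀ t ∈ Set.Ioo (0:ℝ) T, ∀ l : ℝ,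
      DifferentiableAt ℝ (fun s => deriv (fun s' => P s' l) s) t)
    (hPl : ∀ t ∈ Set.Ioo (0:ℝ) T, ∀ l : ℝ,
      DifferentiableAt ℝ (fun m => P t m) l)
    (hxd : ∀ t ∈ Set.Ioo (0:ℝ) T, ∀ l : ℝ,
      DifferentiableAt ℝ (fun s => x s l) t)
    (hyd : ∀ t ∈ Set.Ioo (0:ℝ) T, ∀ l : ℝ,
      DifferentiableAt ℝ (fun s => y s l) t)
    (hxl : ∀ t ∈ Set.Ioo (0:ℝ) T, ∀ l : ℝ,
      DifferentiableAt ℝ (fun m => x t m) l)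
    (hyl : ∀ t ∈ Set.Ioo (0:ℝ) T, ∀ l : ℝ,
      DifferentiableAt ℝ (fun m => y t m) l)
    (hxlt : ∀ t ∈ Set.Ioo (0:ℝ) T, ∀ l : ℝ,
      DifferentiableAt ℝ (fun s => deriv (fun m => x s m) l) t)
    (hylt : ∀ t ∈ Set.Ioo (0:ℝ) T, ∀ l : ℝ,
      DifferentiableAt ℝ (fun s => deriv (fun m => y s m) l) t)
    (hxtl : ∀ t ∈ Set.Ioo (0:ℝ) T, ∀ l : ℝ,
      DifferentiableAt ℝ (fun m => deriv (fun s => x s m) t) l)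
    (hytl : ∀ t ∈ Set.Ioo (0:ℝ) T, ∀ l : ℝ,
      DifferentiableAt ℝ (fun m => deriv (fun s => y s m) t) l)
    (hxmix : ∀ t ∈ Set.Ioo (0:ℝ) T, ∀ l : ℝ,
      deriv (fun s => deriv (fun m => x s m) l) t =
        deriv (fun m => deriv (fun s => x s m) t) l)
    (hymix : ∀ t ∈ Set.Ioo (0:ℝ) T, ∀ l : ℝ,
      deriv (fun s => deriv (fun m => y s m) l) t =
        deriv (fun m => deriv (fun s => y s m) t) l)
    (hCd : Differentiable ℝ C)
    (heqP : ∀ t ∈ Set.Ioo (0:ℝ) T, ∀ l : ℝ,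
      deriv (fun s => P s l) t =
        ρ * (u * deriv (fun m => y t m) l - v * deriv (fun m => x t m) l))
    (hxt : ∀ t ∈ Set.Ioo (0:ℝ) T, ∀ l : ℝ,
      deriv (fun s => x s l) t = I t l / P t l)
    (hyt : ∀ t ∈ Set.Ioo (0:ℝ) T, ∀ l : ℝ,
      deriv (fun s => y s l) t = J t l / P t l)
    (hC : ∀ t ∈ Set.Ioo (0:ℝ) T, ∀ l : ℝ, u * J t l - v * I t l = C l) :
    ∀ t ∈ Set.Ioo (0:ℝ) T, ∀ l : ℝ,
      deriv (fun s => deriv (fun s' => P s' l) s) t =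
        ρ * deriv (fun m => C m / P t m) l := by
  intro t ht l
  have h1 : (fun s => deriv (fun s' => P s' l) s) =ᶠ[nhds t]
      (fun s => ρ * (u * deriv (fun m => y s m) l - v * deriv (fun m => x s m) l)) := by
    filter_upwards [isOpen_Ioo.mem_nhds ht] with s hs
    exact heqP s hs l
  have h2 : (fun m => C m / P t m) =
      (fun m => u * deriv (fun s => y s m) t - v * deriv (fun s => x s m) t) := by
    funext m
    rw [hxt t ht m, hyt t ht m, ← hC t ht m]
    ring
  have h3 := (((hylt t ht l).hasDerivAt.const_mul u).sub
    ((hxlt t ht l).hasDerivAt.const_mul v)).const_mul ρ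
  have h4 := ((hytl t ht l).hasDerivAt.const_mul u).sub
    ((hxtl t ht l).hasDerivAt.const_mul v)
  rw [h1.deriv_eq, h2]
  refine h3.deriv.trans ?_
  rw [hxmix t ht l, hymix t ht l]
  exact congrArg (fun z => ρ * z) h4.deriv.symm
end

section
/- Let Ω⊆ℝ³ be open with coordinates (t,x,y), let u,v:Ω→ℝ be differentiable, let a,b:Ω→ℝ be twice differentiable and satisfy ∂_ta + u∂_xa + v∂_ya = 0 and ∂_tb + u∂_xb + v∂_yb = 0 on Ω, and suppose u = u₀(a,b) and v = v₀(a,b) for some C¹ functions u₀,v₀:ℝ²→ℝ. Let ρ₀:ℝ²→ℝ be differentiable and define ρ := ρ₀(a,b)·(∂_xa·∂_yb − ∂_ya·∂_xb). Then ∂_tρ + ∂_x(ρu) + ∂_y(ρv) = 0 on Ω. -/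
lemma slice1 {F : ℝ × ℝ × ℝ → ℝ} {F' : ℝ × ℝ × ℝ →L[ℝ] ℝ} {t x y : ℝ}
    (h : HasFDerivAt F F' (t, x, y)) : HasDerivAt (fun s => F (s, x, y)) (F' (1, 0, 0)) t := by
  have h1 : HasDerivAt (fun s : ℝ => (s, x, y)) ((1 : ℝ), (0 : ℝ), (0 : ℝ)) t :=
    (hasDerivAt_id t).prodMk ((hasDerivAt_const t x).prodMk (hasDerivAt_const t y))
  exact HasFDerivAt.comp_hasDerivAt t h h1

lemma slice2 {F : ℝ × ℝ × ℝ → ℝ} {F' : ℝ × ℝ × ℝ →L[ℝ] ℝ} {t x y : ℝ}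
    (h : HasFDerivAt F F' (t, x, y)) : HasDerivAt (fun s => F (t, s, y)) (F' (0, 1, 0)) x := by
  have h1 : HasDerivAt (fun s : ℝ => (t, s, y)) ((0 : ℝ), (1 : ℝ), (0 : ℝ)) x :=
    (hasDerivAt_const x t).prodMk ((hasDerivAt_id x).prodMk (hasDerivAt_const x y))
  exact HasFDerivAt.comp_hasDerivAt x h h1

lemma slice3 {F : ℝ × ℝ × ℝ → ℝ} {F' : ℝ × ℝ × ℝ →L[ℝ] ℝ} {t x y : ℝ}
    (h : HasFDerivAt F F' (t, x, y)) : HasDerivAt (fun s => F (t, x, s)) (F' (0, 0, 1)) y := by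
  have h1 : HasDerivAt (fun s : ℝ => (t, x, s)) ((0 : ℝ), (0 : ℝ), (1 : ℝ)) y :=
    (hasDerivAt_const y t).prodMk ((hasDerivAt_const y x).prodMk (hasDerivAt_id y))
  exact HasFDerivAt.comp_hasDerivAt y h h1

lemma transport_facts (Ω : Set (ℝ × ℝ × ℝ)) (hΩ : IsOpen Ω) (U V A : ℝ × ℝ × ℝ → ℝ)
    (p : ℝ × ℝ × ℝ) (hp : p ∈ Ω)
    (hU : DifferentiableAt ℝ U p) (hV : DifferentiableAt ℝ V p)
    (hA : ∀ p ∈ Ω, DifferentiableAt ℝ A p ∧ DifferentiableAt ℝ (fderiv ℝ A) p)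
    (h : ∀ q ∈ Ω, fderiv ℝ A q (1, 0, 0) + U q * fderiv ℝ A q (0, 1, 0)
      + V q * fderiv ℝ A q (0, 0, 1) = 0) :
    (∀ w z, fderiv ℝ (fderiv ℝ A) p w z = fderiv ℝ (fderiv ℝ A) p z w) ∧
    (∀ z, HasFDerivAt (fun q => fderiv ℝ A q z) ((fderiv ℝ (fderiv ℝ A) p).flip z) p) ∧
    ∀ w, fderiv ℝ (fderiv ℝ A) p w (1, 0, 0)
      + (fderiv ℝ U p w * fderiv ℝ A p (0, 1, 0) + U p * fderiv ℝ (fderiv ℝ A) p w (0, 1, 0))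
      + (fderiv ℝ V p w * fderiv ℝ A p (0, 0, 1) + V p * fderiv ℝ (fderiv ℝ A) p w (0, 0, 1))
      = 0 := by
  have hn : Ω ∈ nhds p := hΩ.mem_nhds hp
  have key : ∀ z, HasFDerivAt (fun q => fderiv ℝ A q z) ((fderiv ℝ (fderiv ℝ A) p).flip z) p := by
    intro z
    have := (hA p hp).2.hasFDerivAt.clm_apply (hasFDerivAt_const z p)
    simpa using this
  refine ⟨?_, key, ?_⟩
  · intro w z
    refine second_derivative_symmetric_of_eventually (f := A) (f' := fderiv ℝ A) ?_
      (hA p hp).2.hasFDerivAt w z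
    filter_upwards [hn] with q hq using (hA q hq).1.hasFDerivAt
  · intro w
    have h1 := ((key (1, 0, 0)).add (hU.hasFDerivAt.mul (key (0, 1, 0)))).add
      (hV.hasFDerivAt.mul (key (0, 0, 1)))
    have h2 : HasFDerivAt (fun _ : ℝ × ℝ × ℝ => (0 : ℝ)) (0 : ℝ × ℝ × ℝ →L[ℝ] ℝ) p :=
      hasFDerivAt_const _ _
    have h3 := h2.congr_of_eventuallyEq
      (f₁ := fun q => fderiv ℝ A q (1, 0, 0) + U q * fderiv ℝ A q (0, 1, 0)
        + V q * fderiv ℝ A q (0, 0, 1)) (by filter_upwards [hn] with q hq using h q hq)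
    have h4 := DFunLike.congr_fun (h1.unique h3) w
    simp at h4
    linear_combination h4

/-- The density formula of the characteristics representation (formula (4)):
`ρ = ρ₀(a,b)·∂(a,b)/∂(x,y)` satisfies the continuity equation. -/
theorem stmt_18 (Ω : Set (ℝ × ℝ × ℝ)) (hΩ : IsOpen Ω)
    (u v a b : ℝ → ℝ → ℝ → ℝ)
    (hud : ∀ p ∈ Ω, DifferentiableAt ℝ (fun q : ℝ × ℝ × ℝ => u q.1 q.2.1 q.2.2) p)
    (hvd : ∀ p ∈ Ω, DifferentiableAt ℝ (fun q : ℝ × ℝ × ℝ => v q.1 q.2.1 q.2.2) p)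
    (had : ∀ p ∈ Ω,
      DifferentiableAt ℝ (fun q : ℝ × ℝ × ℝ => a q.1 q.2.1 q.2.2) p ∧
      DifferentiableAt ℝ (fderiv ℝ fun q : ℝ × ℝ × ℝ => a q.1 q.2.1 q.2.2) p)
    (hbd : ∀ p ∈ Ω,
      DifferentiableAt ℝ (fun q : ℝ × ℝ × ℝ => b q.1 q.2.1 q.2.2) p ∧
      DifferentiableAt ℝ (fderiv ℝ fun q : ℝ × ℝ × ℝ => b q.1 q.2.1 q.2.2) p)
    (ha : ∀ t x y : ℝ, (t, x, y) ∈ Ω →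
      deriv (fun s => a s x y) t + u t x y * deriv (fun m => a t m y) x +
        v t x y * deriv (fun m => a t x m) y = 0)
    (hb : ∀ t x y : ℝ, (t, x, y) ∈ Ω →
      deriv (fun s => b s x y) t + u t x y * deriv (fun m => b t m y) x +
        v t x y * deriv (fun m => b t x m) y = 0)
    (u₀ v₀ : ℝ → ℝ → ℝ)
    (hu₀ : ContDiff ℝ 1 fun p : ℝ × ℝ => u₀ p.1 p.2)
    (hv₀ : ContDiff ℝ 1 fun p : ℝ × ℝ => v₀ p.1 p.2)
    (huu₀ : ∀ t x y : ℝ, (t, x, y) ∈ Ω → u t x y = u₀ (a t x y) (b t x y))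
    (hvv₀ : ∀ t x y : ℝ, (t, x, y) ∈ Ω → v t x y = v₀ (a t x y) (b t x y))
    (ρ₀ : ℝ → ℝ → ℝ)
    (hρ₀ : Differentiable ℝ fun p : ℝ × ℝ => ρ₀ p.1 p.2)
    (ρ : ℝ → ℝ → ℝ → ℝ)
    (hρ : ∀ t x y : ℝ, ρ t x y = ρ₀ (a t x y) (b t x y) *
      (deriv (fun m => a t m y) x * deriv (fun m => b t x m) y -
       deriv (fun m => a t x m) y * deriv (fun m => b t m y) x)) :
    ∀ t x y : ℝ, (t, x, y) ∈ Ω →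
      deriv (fun s => ρ s x y) t + deriv (fun m => ρ t m y * u t m y) x +
        deriv (fun m => ρ t x m * v t x m) y = 0 := by
  intro t x y hp
  set A : ℝ × ℝ × ℝ → ℝ := fun q => a q.1 q.2.1 q.2.2 with hAdef
  set B : ℝ × ℝ × ℝ → ℝ := fun q => b q.1 q.2.1 q.2.2 with hBdef
  set U : ℝ × ℝ × ℝ → ℝ := fun q => u q.1 q.2.1 q.2.2 with hUdef
  set V : ℝ × ℝ × ℝ → ℝ := fun q => v q.1 q.2.1 q.2.2 with hVdef
  have a1 : ∀ t x y, (t, x, y) ∈ Ω → deriv (fun s => a s x y) t = fderiv ℝ A (t, x, y) (1, 0, 0) :=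
    fun t x y h => (slice1 (had _ h).1.hasFDerivAt).deriv
  have a2 : ∀ t x y, (t, x, y) ∈ Ω → deriv (fun s => a t s y) x = fderiv ℝ A (t, x, y) (0, 1, 0) :=
    fun t x y h => (slice2 (had _ h).1.hasFDerivAt).deriv
  have a3 : ∀ t x y, (t, x, y) ∈ Ω → deriv (fun s => a t x s) y = fderiv ℝ A (t, x, y) (0, 0, 1) :=
    fun t x y h => (slice3 (had _ h).1.hasFDerivAt).deriv
  have b1 : ∀ t x y, (t, x, y) ∈ Ω → deriv (fun s => b s x y) t = fderiv ℝ B (t, x, y) (1, 0, 0) :=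
    fun t x y h => (slice1 (hbd _ h).1.hasFDerivAt).deriv
  have b2 : ∀ t x y, (t, x, y) ∈ Ω → deriv (fun s => b t s y) x = fderiv ℝ B (t, x, y) (0, 1, 0) :=
    fun t x y h => (slice2 (hbd _ h).1.hasFDerivAt).deriv
  have b3 : ∀ t x y, (t, x, y) ∈ Ω → deriv (fun s => b t x s) y = fderiv ℝ B (t, x, y) (0, 0, 1) :=
    fun t x y h => (slice3 (hbd _ h).1.hasFDerivAt).deriv
  have hA' : ∀ q ∈ Ω, fderiv ℝ A q (1, 0, 0) + U q * fderiv ℝ A q (0, 1, 0)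
      + V q * fderiv ℝ A q (0, 0, 1) = 0 := by
    rintro ⟨t, x, y⟩ h
    rw [← a1 t x y h, ← a2 t x y h, ← a3 t x y h]
    exact ha t x y h
  have hB' : ∀ q ∈ Ω, fderiv ℝ B q (1, 0, 0) + U q * fderiv ℝ B q (0, 1, 0)
      + V q * fderiv ℝ B q (0, 0, 1) = 0 := by
    rintro ⟨t, x, y⟩ h
    rw [← b1 t x y h, ← b2 t x y h, ← b3 t x y h]
    exact hb t x y h
  obtain ⟨sA, kA, eA⟩ := transport_facts Ω hΩ U V A _ hp (hud _ hp) (hvd _ hp) had hA'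
  obtain ⟨sB, kB, eB⟩ := transport_facts Ω hΩ U V B _ hp (hud _ hp) (hvd _ hp) hbd hB'
  have hP : HasFDerivAt (fun q => ρ₀ (A q) (B q)) _ (t, x, y) :=
    HasFDerivAt.comp (t, x, y) (g := fun p : ℝ × ℝ => ρ₀ p.1 p.2) (f := fun q => (A q, B q))
      (hρ₀ _).hasFDerivAt ((had _ hp).1.hasFDerivAt.prodMk (hbd _ hp).1.hasFDerivAt)
  have hR0 := hP.mul (((kA (0, 1, 0)).mul (kB (0, 0, 1))).sub ((kA (0, 0, 1)).mul (kB (0, 1, 0))))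
  have hR := hR0.congr_of_eventuallyEq (f₁ := fun q => ρ q.1 q.2.1 q.2.2) (by
    filter_upwards [hΩ.mem_nhds hp] with q hq
    obtain ⟨t, x, y⟩ := q
    simp only [hρ, a2 t x y hq, a3 t x y hq, b2 t x y hq, b3 t x y hq]
    rfl)
  have d1 := (slice1 hR).deriv
  have d2 := (slice2 (hR.mul (hud _ hp).hasFDerivAt)).deriv
  have d3 := (slice3 (hR.mul (hvd _ hp).hasFDerivAt)).deriv
  have hρp : ρ t x y = ρ₀ (a t x y) (b t x y) * (fderiv ℝ A (t, x, y) (0, 1, 0) *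
      fderiv ℝ B (t, x, y) (0, 0, 1) - fderiv ℝ A (t, x, y) (0, 0, 1) *
      fderiv ℝ B (t, x, y) (0, 1, 0)) := by
    rw [hρ, a2 t x y hp, a3 t x y hp, b2 t x y hp, b3 t x y hp]
  obtain ⟨r1, r2, hL⟩ : ∃ r1 r2 : ℝ, ∀ c d : ℝ,
      fderiv ℝ (fun p : ℝ × ℝ => ρ₀ p.1 p.2) (A (t, x, y), B (t, x, y)) (c, d)
      = c * r1 + d * r2 := by
    refine ⟨fderiv ℝ (fun p : ℝ × ℝ => ρ₀ p.1 p.2) (A (t, x, y), B (t, x, y)) (1, 0),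
      fderiv ℝ (fun p : ℝ × ℝ => ρ₀ p.1 p.2) (A (t, x, y), B (t, x, y)) (0, 1), ?_⟩
    intro c d
    rw [← smul_eq_mul, ← smul_eq_mul, ← map_smul, ← map_smul, ← map_add]
    simp
  have f1 : deriv (fun s => ρ s x y) t = _ := d1
  have f2 : deriv (fun m => ρ t m y * u t m y) x = _ := d2
  have f3 : deriv (fun m => ρ t x m * v t x m) y = _ := d3
  have hA0 := hA' _ hp
  have hB0 := hB' _ hp
  have eA2 := eA (0, 1, 0)
  have eA3 := eA (0, 0, 1)
  have eB2 := eB (0, 1, 0)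
  have eB3 := eB (0, 0, 1)
  rw [sA (0, 1, 0) (1, 0, 0)] at eA2
  rw [sA (0, 0, 1) (1, 0, 0), sA (0, 0, 1) (0, 1, 0)] at eA3
  rw [sB (0, 1, 0) (1, 0, 0)] at eB2
  rw [sB (0, 0, 1) (1, 0, 0), sB (0, 0, 1) (0, 1, 0)] at eB3
  rw [f1, f2, f3]
  simp only [_root_.add_apply, _root_.sub_apply,
    _root_.smul_apply, ContinuousLinearMap.flip_apply, smul_eq_mul, Pi.sub_apply, Pi.mul_apply,
    ContinuousLinearMap.comp_apply, ContinuousLinearMap.prod_apply, hL, hρp,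
    sA (0, 0, 1) (0, 1, 0), sB (0, 0, 1) (0, 1, 0)]
  have q1 : A (t, x, y) = a t x y := rfl
  have q2 : B (t, x, y) = b t x y := rfl
  have q3 : U (t, x, y) = u t x y := rfl
  have q4 : V (t, x, y) = v t x y := rfl
  simp only [q1, q2, q3, q4] at *
  linear_combination (fderiv ℝ A (t, x, y) (0, 1, 0) *
      fderiv ℝ B (t, x, y) (0, 0, 1) - fderiv ℝ A (t, x, y) (0, 0, 1) *
      fderiv ℝ B (t, x, y) (0, 1, 0)) * (r1 * hA0 + r2 * hB0) + ρ₀ (a t x y) (b t x y) *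
      (fderiv ℝ B (t, x, y) (0, 0, 1) * eA2 + fderiv ℝ A (t, x, y) (0, 1, 0) * eB3
      - fderiv ℝ B (t, x, y) (0, 1, 0) * eA3 - fderiv ℝ A (t, x, y) (0, 0, 1) * eB2)
end
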